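/- arXiv:2101.08080 — 5 statements merged into one kernel-verified Lean document; each statement's English description precedes it below -/
import Mathlib

section
/- Assume G satisfies (Reg), (Mono) and (Twist), and let φ : Ω → ℝ be a G-convex function. Let Y₀ ⊆ Y be the set of all y ∈ Y such that G(·,y,λ) supports φ at some point of Ω for some λ ∈ ℝ. Then there exists a function ψ : Y₀ → ℝ such that for all x ∈ Ω, φ(x) = max_{y ∈ Y₀} G(x, y, ψ(y)). In particular, for each y ∈ Y₀ the value λ ∈ ℝ for which G(·,y,λ) supports φ at some point is unique. -/
set_option autoImplicit false

open MeasureTheory Set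

noncomputable section

variable {d N : ℕ}

/-!
If `G(·, i, v)` touches `φ` from below at `x₀`, then `v` is the least parameter for which
`G(·, i, ·)` stays below `φ`: a smaller one would push it strictly above `φ` at `x₀`. Hence each
supporting parameter `ψ i` is determined by `i` alone, and `φ` is the maximum of the functions
`G(·, i, ψ i)`, all of which lie below `φ` and one of which touches it at any given point.
-/

section Supports

variable {X ι V R : Type*} [Preorder R] {Ω : Set X} {φ : X → R}

/-- `g` supports `φ` at `x₀` relative to `Ω`: it lies below `φ` on `Ω` and touches it at `x₀`. The
membership `x₀ ∈ Ω` is not part of the definition. -/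
def SupportsAt (Ω : Set X) (g φ : X → R) (x₀ : X) : Prop :=
  (∀ x ∈ Ω, g x ≤ φ x) ∧ φ x₀ = g x₀

/-- `φ` is `G`-convex on `Ω`: at every point of `Ω` it is supported by some `G(·, i, v)`. -/
def GConvexOn (Ω : Set X) (G : X → ι → V → R) (φ : X → R) : Prop :=
  ∀ x₀ ∈ Ω, ∃ i v, SupportsAt Ω (fun x => G x i v) φ x₀

/-- The set `Y₀` of indices `i` for which some `G(·, i, v)` supports `φ` at a point of `Ω`. -/
def supportingIndices (Ω : Set X) (G : X → ι → V → R) (φ : X → R) : Set ι :=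
  {i | ∃ v, ∃ x₀ ∈ Ω, SupportsAt Ω (fun x => G x i v) φ x₀}

variable [LinearOrder V]

theorem SupportsAt.isLeast {g : X → V → R} {v : V} {x₀ : X} (hx₀ : x₀ ∈ Ω)
    (hanti : StrictAnti (g x₀)) (hv : SupportsAt Ω (fun x => g x v) φ x₀) :
    IsLeast {w | ∀ x ∈ Ω, g x w ≤ φ x} v := by
  refine ⟨hv.1, fun w hw => hanti.le_iff_ge.mp ?_⟩
  calc g x₀ w ≤ φ x₀ := hw x₀ hx₀
    _ = g x₀ v := hv.2

variable {G : X → ι → V → R}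

theorem existsUnique_supportsAt_of_mem_supportingIndices
    {i : ι} (hanti : ∀ x ∈ Ω, StrictAnti (G x i)) (hi : i ∈ supportingIndices Ω G φ) :
    ∃! v, ∃ x₀ ∈ Ω, SupportsAt Ω (fun x => G x i v) φ x₀ := by
  obtain ⟨v, x₀, hx₀, hv⟩ := hi
  refine ⟨v, ⟨x₀, hx₀, hv⟩, ?_⟩
  rintro w ⟨z₀, hz₀, hw⟩
  exact (hw.isLeast hz₀ (hanti z₀ hz₀)).unique (hv.isLeast hx₀ (hanti x₀ hx₀))

theorem GConvexOn.isGreatest_image (hφ : GConvexOn Ω G φ)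
    (hanti : ∀ x ∈ Ω, ∀ i, StrictAnti (G x i)) {ψ : ι → V}
    (hψ : ∀ i ∈ supportingIndices Ω G φ, IsLeast {v | ∀ x ∈ Ω, G x i v ≤ φ x} (ψ i))
    {x : X} (hx : x ∈ Ω) :
    IsGreatest ((fun i => G x i (ψ i)) '' supportingIndices Ω G φ) (φ x) := by
  constructor
  · obtain ⟨i, v, hv⟩ := hφ x hx
    have hi : i ∈ supportingIndices Ω G φ := ⟨v, x, hx, hv⟩
    have hψv : ψ i = v := (hψ i hi).unique (hv.isLeast hx (hanti x hx i))
    exact ⟨i, hi, (congrArg (G x i) hψv).trans hv.2.symm⟩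
  · rintro _ ⟨i, hi, rfl⟩
    exact (hψ i hi).1 x hx

theorem gconvex_is_Gtransform_on_supporting_set_general [Nonempty V]
    (hanti : ∀ x ∈ Ω, ∀ i, StrictAnti (G x i)) (hφ : GConvexOn Ω G φ) :
    (∃ ψ : ι → V, ∀ x ∈ Ω,
      IsGreatest ((fun i => G x i (ψ i)) '' supportingIndices Ω G φ) (φ x)) ∧
    ∀ i ∈ supportingIndices Ω G φ,
      ∃! v, ∃ x₀ ∈ Ω, SupportsAt Ω (fun x => G x i v) φ x₀ := by
  refine ⟨?_, fun i hi =>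
    existsUnique_supportsAt_of_mem_supportingIndices (fun x hx => hanti x hx i) hi⟩
  have hleast : ∀ i ∈ supportingIndices Ω G φ,
      ∃ v, IsLeast {v | ∀ x ∈ Ω, G x i v ≤ φ x} v := by
    rintro i ⟨v, x₀, hx₀, hv⟩
    exact ⟨v, hv.isLeast hx₀ (hanti x₀ hx₀ i)⟩
  choose! ψ hψ using hleast
  exact ⟨ψ, fun x hx => hφ.isGreatest_image hanti hψ hx⟩

end Supports

/-- Proposition 2.8 (dual formulation): a `G`-convex function is, on the set `Y₀` of
indices that support it somewhere, the `G`-transform of a function `ψ`; the supporting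
value `λ` of each `y ∈ Y₀` is unique. -/
theorem gconvex_is_Gtransform_on_supporting_set
    (hd : 1 ≤ d) (hN : 1 ≤ N)
    {Ω : Set (EuclideanSpace ℝ (Fin d))} (hΩo : IsOpen Ω) (hΩb : Bornology.IsBounded Ω)
    (y : Fin N → EuclideanSpace ℝ (Fin d)) (hy : Function.Injective y)
    (G : EuclideanSpace ℝ (Fin d) → Fin N → ℝ → ℝ)
    (Gx : EuclideanSpace ℝ (Fin d) → Fin N → ℝ → EuclideanSpace ℝ (Fin d))
    (Gv : EuclideanSpace ℝ (Fin d) → Fin N → ℝ → ℝ)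
    (hGx : ∀ x ∈ Ω, ∀ (i : Fin N) (v : ℝ), HasGradientAt (fun x' => G x' i v) (Gx x i v) x)
    (hGv : ∀ x ∈ Ω, ∀ (i : Fin N) (v : ℝ), HasDerivAt (fun v' => G x i v') (Gv x i v) v)
    (hGxc : ∀ i : Fin N, ContinuousOn (fun q : EuclideanSpace ℝ (Fin d) × ℝ => Gx q.1 i q.2) (Ω ×ˢ Set.univ))
    (hGvc : ∀ i : Fin N, ContinuousOn (fun q : EuclideanSpace ℝ (Fin d) × ℝ => Gv q.1 i q.2) (Ω ×ˢ Set.univ))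
    (hReg : ∀ α β : ℝ, α < β → ∃ C : ℝ, ∀ x ∈ Ω, ∀ i : Fin N, ∀ v ∈ Set.Icc α β, ‖Gx x i v‖ ≤ C)
    (hMono : ∀ x ∈ Ω, ∀ (i : Fin N) (v : ℝ), Gv x i v < 0)
    (hTwist : ∀ x ∈ Ω, Function.Injective fun q : Fin N × ℝ => (G x q.1 q.2, Gx x q.1 q.2))
    (φ : EuclideanSpace ℝ (Fin d) → ℝ)
    (hφ : ∀ x₀ ∈ Ω, ∃ (i : Fin N) (lam : ℝ),
      (∀ x ∈ Ω, G x i lam ≤ φ x) ∧ φ x₀ = G x₀ i lam)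
    (Y₀ : Set (Fin N))
    (hY₀ : Y₀ = {i : Fin N | ∃ lam : ℝ, ∃ x₀ ∈ Ω,
      (∀ x ∈ Ω, G x i lam ≤ φ x) ∧ φ x₀ = G x₀ i lam}) :
    (∃ ψ : Fin N → ℝ, ∀ x ∈ Ω,
      IsGreatest ((fun i => G x i (ψ i)) '' Y₀) (φ x)) ∧
    (∀ i ∈ Y₀, ∀ lam₁ lam₂ : ℝ,
      (∃ x₀ ∈ Ω, (∀ x ∈ Ω, G x i lam₁ ≤ φ x) ∧ φ x₀ = G x₀ i lam₁) →
      (∃ x₀ ∈ Ω, (∀ x ∈ Ω, G x i lam₂ ≤ φ x) ∧ φ x₀ = G x₀ i lam₂) →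
      lam₁ = lam₂) := by
  subst hY₀
  exact (gconvex_is_Gtransform_on_supporting_set_general
    (fun x hx i => strictAnti_of_hasDerivAt_neg (hGv x hx i) (hMono x hx i)) hφ).imp_right
    fun huniq i hi _ _ => (huniq i hi).unique
end
end

section
/- Assume G is continuously differentiable in x and satisfies (Mono) and (Twist). Then for every ψ ∈ ℝ^N and all distinct indices i ≠ j, the intersection Lagᵢ(ψ) ∩ Lag_j(ψ) of two generalized Laguerre cells has d-dimensional Lebesgue measure zero. In particular the generalized Laguerre cells (Lagᵢ(ψ))_{1 ≤ i ≤ N} partition Ω up to a Lebesgue-negligible set. -/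
set_option autoImplicit false

open MeasureTheory Set

noncomputable section

variable {d N : ℕ}

/-- Generalized Laguerre cell associated to `ψ` and index `i`. -/
def Lag (Ω : Set (EuclideanSpace ℝ (Fin d))) (G : EuclideanSpace ℝ (Fin d) → Fin N → ℝ → ℝ)
    (ψ : Fin N → ℝ) (i : Fin N) : Set (EuclideanSpace ℝ (Fin d)) :=
  {x ∈ Ω | ∀ j, G x j (ψ j) ≤ G x i (ψ i)}

/-- Interface `Γᵢⱼ(ψ)` between two cells. -/
def Gam (Ω : Set (EuclideanSpace ℝ (Fin d))) (G : EuclideanSpace ℝ (Fin d) → Fin N → ℝ → ℝ)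
    (ψ : Fin N → ℝ) (i j : Fin N) : Set (EuclideanSpace ℝ (Fin d)) :=
  {x ∈ Ω | G x i (ψ i) = G x j (ψ j)}

/-- The mass function `H(ψ) = (μ(Lagᵢ(ψ)))ᵢ` where `μ` has density `ρ`. -/
def Hfun (Ω : Set (EuclideanSpace ℝ (Fin d))) (G : EuclideanSpace ℝ (Fin d) → Fin N → ℝ → ℝ)
    (ρ : EuclideanSpace ℝ (Fin d) → ℝ) (ψ : Fin N → ℝ) : Fin N → ℝ :=
  fun i => ((volume.withDensity fun x => ENNReal.ofReal (ρ x)) (Lag Ω G ψ i)).toReal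

/-!
On the common boundary of two cells the difference of the two competing functions vanishes, while
its derivative does not, by the twist condition. Such a set `s` is negligible, with no need for the
implicit function theorem: if `f` is constant on `s` and `ℓ` is its derivative at `x ∈ s`, then
`z ↦ z - (f z - f x) • v` agrees with the identity on `s`, so `id - ℓ(·) • v` is a derivative of the
identity within `s` at `x`. Choosing `v` with `ℓ v = 1` makes it singular, and the image of a set
under a map with everywhere singular derivative is negligible.
-/

section ConstantOnSet

variable {E F : Type*} [NormedAddCommGroup E] [NormedSpace ℝ E]
  [NormedAddCommGroup F] [NormedSpace ℝ F]

theorem hasFDerivWithinAt_id_sub_smulRight_of_const {s : Set E} {f : E → ℝ} {f' : E →L[ℝ] ℝ}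
    {x : E} (hf : HasFDerivWithinAt f f' s x) (hconst : ∀ z ∈ s, f z = f x) (v : E) :
    HasFDerivWithinAt id (ContinuousLinearMap.id ℝ E - f'.smulRight v) s x := by
  have hperturbed : HasFDerivWithinAt (fun z => z - (f z - f x) • v)
      (ContinuousLinearMap.id ℝ E - f'.smulRight v) s x :=
    (hasFDerivWithinAt_id x s).sub ((hf.sub_const (f x)).smul_const v)
  exact hperturbed.congr (fun z hz => by simp [hconst z hz]) (by simp)

theorem det_id_sub_smulRight [FiniteDimensional ℝ E] (ℓ : E →L[ℝ] ℝ) (v : E) :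
    (ContinuousLinearMap.id ℝ E - ℓ.smulRight v).det = 1 - ℓ v := by
  have htransvection : (ContinuousLinearMap.id ℝ E - ℓ.smulRight v : E →ₗ[ℝ] E) =
      LinearMap.transvection ℓ.toLinearMap (-v) := by
    ext z
    simp [LinearMap.transvection.apply, sub_eq_add_neg]
  rw [ContinuousLinearMap.det, ContinuousLinearMap.toLinearMap_sub, htransvection,
    LinearMap.transvection.det]
  simp [sub_eq_add_neg]

variable [FiniteDimensional ℝ E] [MeasurableSpace E] [BorelSpace E]
  (μ : Measure E) [μ.IsAddHaarMeasure]

theorem addHaar_eq_zero_of_const_of_hasFDerivWithinAt_ne_zero {s : Set E} {f : E → F}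
    {f' : E → E →L[ℝ] F} {c : F} (hf : ∀ x ∈ s, HasFDerivWithinAt f (f' x) s x)
    (hconst : ∀ x ∈ s, f x = c) (hf' : ∀ x ∈ s, f' x ≠ 0) : μ s = 0 := by
  have exists_singular : ∀ x ∈ s, ∃ A : E →L[ℝ] E, HasFDerivWithinAt id A s x ∧ A.det = 0 := by
    intro x hx
    obtain ⟨v, hv⟩ := DFunLike.ne_iff.mp (hf' x hx)
    obtain ⟨φ, hφ⟩ := SeparatingDual.exists_eq_one (R := ℝ) hv
    have hconst_comp : ∀ z ∈ s, (φ ∘ f) z = (φ ∘ f) x := fun z hz =>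
      congrArg φ ((hconst z hz).trans (hconst x hx).symm)
    exact ⟨_, hasFDerivWithinAt_id_sub_smulRight_of_const
      (φ.hasFDerivAt.comp_hasFDerivWithinAt x (hf x hx)) hconst_comp v,
      (det_id_sub_smulRight _ v).trans (sub_eq_zero.mpr hφ.symm)⟩
  choose! A hA hdet using exists_singular
  simpa only [image_id] using addHaar_image_eq_zero_of_det_fderivWithin_eq_zero μ hA hdet

theorem addHaar_setOf_eq_eq_zero_of_hasFDerivWithinAt_ne {s : Set E} {f g : E → F}
    {f' g' : E → E →L[ℝ] F} (hf : ∀ x ∈ s, HasFDerivWithinAt f (f' x) s x)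
    (hg : ∀ x ∈ s, HasFDerivWithinAt g (g' x) s x)
    (hne : ∀ x ∈ s, f x = g x → f' x ≠ g' x) : μ {x ∈ s | f x = g x} = 0 :=
  addHaar_eq_zero_of_const_of_hasFDerivWithinAt_ne_zero μ
    (fun x hx => ((hf x hx.1).sub (hg x hx.1)).mono (sep_subset s _))
    (fun _ hx => sub_eq_zero.mpr hx.2) (fun x hx => sub_ne_zero.mpr (hne x hx.1 hx.2))

end ConstantOnSet

/-- The set of points of `s` at which `u i` is largest among the functions `u j`. The generalized
Laguerre cell `Lag Ω G ψ i` is the case `u j x = G x j (ψ j)`. -/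
def argmaxCell {X ι R : Type*} [LE R] (s : Set X) (u : ι → X → R) (i : ι) : Set X :=
  {x ∈ s | ∀ j, u j x ≤ u i x}

theorem argmaxCell_inter_subset {X ι R : Type*} [PartialOrder R] (s : Set X) (u : ι → X → R)
    (i j : ι) : argmaxCell s u i ∩ argmaxCell s u j ⊆ {x ∈ s | u i x = u j x} :=
  fun _ ⟨⟨hx, hi⟩, ⟨_, hj⟩⟩ => ⟨hx, le_antisymm (hj i) (hi j)⟩

theorem iUnion_argmaxCell {X ι R : Type*} [LinearOrder R] [Finite ι] [Nonempty ι] (s : Set X)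
    (u : ι → X → R) : ⋃ i, argmaxCell s u i = s := by
  refine (iUnion_subset fun i => sep_subset s _).antisymm fun x hx => ?_
  obtain ⟨i, hi⟩ := Finite.exists_max (u · x)
  exact mem_iUnion.mpr ⟨i, hx, hi⟩

theorem laguerre_cells_ae_disjoint_general {E ι : Type*} [NormedAddCommGroup E] [NormedSpace ℝ E]
    [FiniteDimensional ℝ E] [MeasurableSpace E] [BorelSpace E] (μ : Measure E)
    [μ.IsAddHaarMeasure] [Finite ι] [Nonempty ι] {s : Set E} {u : ι → E → ℝ}
    {u' : ι → E → E →L[ℝ] ℝ} (hu : ∀ i, ∀ x ∈ s, HasFDerivWithinAt (u i) (u' i x) s x)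
    (htwist : ∀ x ∈ s, Function.Injective fun i => (u i x, u' i x)) :
    (∀ i j, i ≠ j → μ (argmaxCell s u i ∩ argmaxCell s u j) = 0) ∧
      ⋃ i, argmaxCell s u i = s := by
  refine ⟨fun i j hij => ?_, iUnion_argmaxCell s u⟩
  exact measure_mono_null (argmaxCell_inter_subset s u i j)
    (addHaar_setOf_eq_eq_zero_of_hasFDerivWithinAt_ne μ (hu i) (hu j)
      fun x hx hval hderiv => hij (htwist x hx (Prod.ext hval hderiv)))

/-- Two distinct generalized Laguerre cells intersect in a Lebesgue-negligible set;
in particular the Laguerre cells partition `Ω` up to a negligible set. -/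
theorem laguerre_cells_ae_disjoint
    (hd : 1 ≤ d) (hN : 1 ≤ N)
    {Ω : Set (EuclideanSpace ℝ (Fin d))} (hΩo : IsOpen Ω) (hΩb : Bornology.IsBounded Ω)
    (y : Fin N → EuclideanSpace ℝ (Fin d)) (hy : Function.Injective y)
    (G : EuclideanSpace ℝ (Fin d) → Fin N → ℝ → ℝ)
    (Gx : EuclideanSpace ℝ (Fin d) → Fin N → ℝ → EuclideanSpace ℝ (Fin d))
    (Gv : EuclideanSpace ℝ (Fin d) → Fin N → ℝ → ℝ)
    (hGx : ∀ x ∈ Ω, ∀ (i : Fin N) (v : ℝ), HasGradientAt (fun x' => G x' i v) (Gx x i v) x)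
    (hGv : ∀ x ∈ Ω, ∀ (i : Fin N) (v : ℝ), HasDerivAt (fun v' => G x i v') (Gv x i v) v)
    (hGxc : ∀ i : Fin N, ContinuousOn (fun q : EuclideanSpace ℝ (Fin d) × ℝ => Gx q.1 i q.2) (Ω ×ˢ Set.univ))
    (hGvc : ∀ i : Fin N, ContinuousOn (fun q : EuclideanSpace ℝ (Fin d) × ℝ => Gv q.1 i q.2) (Ω ×ˢ Set.univ))
    (hMono : ∀ x ∈ Ω, ∀ (i : Fin N) (v : ℝ), Gv x i v < 0)
    (hTwist : ∀ x ∈ Ω, Function.Injective fun q : Fin N × ℝ => (G x q.1 q.2, Gx x q.1 q.2))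
    (ψ : Fin N → ℝ) :
    (∀ i j : Fin N, i ≠ j → volume (Lag Ω G ψ i ∩ Lag Ω G ψ j) = 0) ∧
    (⋃ i : Fin N, Lag Ω G ψ i) = Ω := by
  have : Nonempty (Fin N) := Fin.pos_iff_nonempty.mp hN
  have hgraph : Function.Injective fun i => (i, ψ i) := fun _ _ h => congrArg Prod.fst h
  exact laguerre_cells_ae_disjoint_general volume
    (fun i x hx => (hGx x hx i (ψ i)).hasFDerivAt.hasFDerivWithinAt) fun x hx =>
      (Function.injective_id.prodMap (InnerProductSpace.toDual ℝ _).injective).comp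
        ((hTwist x hx).comp hgraph)
end
end

section
/- Assume G ∈ C²(Ω × Y × ℝ) satisfies (Reg), (Mono), (Twist), (Gen_Ω) and (Gen_∂X), that X ⊆ Ω is compact and ρ is a continuous probability density supported in X. Then for all i ≠ j in {1,…,N}, the function Hᵢⱼ : ℝ^N → ℝ defined by Hᵢⱼ(ψ) = ∫_{Lagᵢ(ψ) ∩ Lag_j(ψ)} ρ(x) · |∂ᵥG(x,yᵢ,ψᵢ)| / ‖∇ₓG(x,y_j,ψ_j) − ∇ₓG(x,yᵢ,ψᵢ)‖ dℋ^{d−1}(x) is continuous on ℝ^N. -/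
set_option autoImplicit false

open MeasureTheory Set

noncomputable section

variable {d N : ℕ}

/-!
Near a zero where the gradient does not vanish, and for every `K > 1`, the zero sets of a family
`f p` with `p` close to `p₀` are graphs over one fixed ball of the tangent hyperplane. The graph
maps are `K`-Lipschitz, do not decrease distances, and converge pointwise as `p → p₀`. Hence an
integral over `{f p = 0}` agrees, up to the factor `K ^ (d - 1)`, with a flat integral to which
dominated convergence applies. A partition of unity and `K → 1` give continuity in `p`, with no
change-of-variables formula for surfaces.

For `f ψ x = G x j (ψ j) - G x i (ψ i)` the gradient does not vanish on the zero set by (Twist).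
By (Gen_Ω), at almost every zero no third `G x k (ψ k)` ties with these two, so membership in
`Lag i ∩ Lag j` is locally constant along the zero set there, jointly in `ψ` and `x`.
-/

open Filter Topology Function Metric
open scoped ENNReal NNReal

section HausdorffMeasure

variable {E F : Type*} [EMetricSpace E] [MeasurableSpace E] [BorelSpace E]
  [EMetricSpace F] [MeasurableSpace F] [BorelSpace F] {T : F → E} {K : ℝ≥0} {m : ℝ}

theorem lintegral_hausdorffMeasure_le_of_lipschitzWith (hT : LipschitzWith K T) (hm : 0 ≤ m)
    {h : E → ℝ≥0∞} (hh : Measurable h) (hsupp : support h ⊆ range T) :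
    ∫⁻ x, h x ∂μH[m] ≤ (K : ℝ≥0∞) ^ m * ∫⁻ w, h (T w) ∂μH[m] := by
  have hle : (μH[m] : Measure E).restrict (range T) ≤ (K : ℝ≥0∞) ^ m • (μH[m]).map T := by
    refine Measure.le_iff.2 fun B hB => ?_
    rw [Measure.restrict_apply hB, Measure.smul_apply,
      Measure.map_apply hT.continuous.measurable hB, ← image_preimage_eq_inter_range]
    exact hT.hausdorffMeasure_image_le hm _
  calc ∫⁻ x, h x ∂μH[m] = ∫⁻ x in support h, h x ∂μH[m] := by
        rw [← lintegral_indicator (measurableSet_support hh), indicator_support]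
    _ ≤ ∫⁻ x in range T, h x ∂μH[m] := lintegral_mono_set hsupp
    _ ≤ ∫⁻ x, h x ∂((K : ℝ≥0∞) ^ m • (μH[m]).map T) := lintegral_mono' hle le_rfl
    _ = (K : ℝ≥0∞) ^ m * ∫⁻ w, h (T w) ∂μH[m] := by
        rw [lintegral_smul_measure, lintegral_map hh hT.continuous.measurable, smul_eq_mul]

theorem lintegral_comp_hausdorffMeasure_le_of_antilipschitzWith (hT : AntilipschitzWith K T)
    (hTm : Measurable T) (hm : 0 ≤ m) {h : E → ℝ≥0∞} (hh : Measurable h) :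
    ∫⁻ w, h (T w) ∂μH[m] ≤ (K : ℝ≥0∞) ^ m * ∫⁻ x, h x ∂μH[m] := by
  have hle : (μH[m]).map T ≤ (K : ℝ≥0∞) ^ m • (μH[m] : Measure E) := by
    refine Measure.le_iff.2 fun B hB => ?_
    rw [Measure.map_apply hTm hB]
    exact hT.hausdorffMeasure_preimage_le hm B
  calc ∫⁻ w, h (T w) ∂μH[m] = ∫⁻ x, h x ∂(μH[m]).map T := (lintegral_map hh hTm).symm
    _ ≤ ∫⁻ x, h x ∂((K : ℝ≥0∞) ^ m • (μH[m] : Measure E)) := lintegral_mono' hle le_rfl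
    _ = (K : ℝ≥0∞) ^ m * ∫⁻ x, h x ∂μH[m] := by rw [lintegral_smul_measure, smul_eq_mul]

theorem ae_hausdorffMeasure_comp_of_antilipschitzWith (hT : AntilipschitzWith K T) (hm : 0 ≤ m)
    {q : E → Prop} (hq : ∀ᵐ x ∂(μH[m] : Measure E), q x) :
    ∀ᵐ w ∂(μH[m] : Measure F), q (T w) := by
  refine measure_mono_null_ae (t := T ⁻¹' {x | ¬ q x}) (.of_forall fun _ => id) ?_
  exact nonpos_iff_eq_zero.1 <| (hT.hausdorffMeasure_preimage_le hm _).trans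
    (by rw [ae_iff.1 hq, mul_zero])

end HausdorffMeasure

section ContinuousUpTo

variable {P : Type*} [TopologicalSpace P] {p₀ : P} {C : ℝ≥0∞}

/-- `J` agrees near `p₀`, up to the factor `C` in both directions, with a function that is finite
and continuous at `p₀`. Unlike continuity itself, this can be checked through a parametrization
that distorts measures by a factor at most `C`; having it for `C` arbitrarily close to `1` recovers
continuity. -/
def ContinuousAtUpTo (C : ℝ≥0∞) (J : P → ℝ≥0∞) (p₀ : P) : Prop :=
  ∃ L : P → ℝ≥0∞, ContinuousAt L p₀ ∧ L p₀ ≠ ∞ ∧ ∀ᶠ p in 𝓝 p₀, J p ≤ C * L p ∧ L p ≤ C * J p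

namespace ContinuousAtUpTo

theorem of_eventually_eq_zero {J : P → ℝ≥0∞} (hJ : ∀ᶠ p in 𝓝 p₀, J p = 0) :
    ContinuousAtUpTo C J p₀ :=
  ⟨0, continuousAt_const, ENNReal.zero_ne_top, hJ.mono fun p hp => by simp [hp]⟩

theorem finsetSum {ι : Type*} {s : Finset ι} {J : ι → P → ℝ≥0∞}
    (hJ : ∀ k ∈ s, ContinuousAtUpTo C (J k) p₀) :
    ContinuousAtUpTo C (fun p => ∑ k ∈ s, J k p) p₀ := by
  choose! L hLc hLfin hJL using hJ
  refine ⟨fun p => ∑ k ∈ s, L k p, tendsto_finsetSum s hLc, ENNReal.sum_ne_top.2 hLfin, ?_⟩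
  filter_upwards [(eventually_all_finset s).2 hJL] with p hp
  simp only [Finset.mul_sum]
  exact ⟨Finset.sum_le_sum fun k hk => (hp k hk).1, Finset.sum_le_sum fun k hk => (hp k hk).2⟩

theorem ne_top {J : P → ℝ≥0∞} (hJ : ContinuousAtUpTo C J p₀) (hC : C ≠ ∞) : J p₀ ≠ ∞ := by
  obtain ⟨L, -, hLfin, hJL⟩ := hJ
  exact ne_top_of_le_ne_top (ENNReal.mul_ne_top hC hLfin) hJL.self_of_nhds.1

theorem eventually_gt {J : P → ℝ≥0∞} (hJ : ContinuousAtUpTo C J p₀) {a : ℝ≥0∞}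
    (ha : C * (C * a) < J p₀) : ∀ᶠ p in 𝓝 p₀, a < J p := by
  obtain ⟨L, hLc, -, hJL⟩ := hJ
  have hL : C * a < L p₀ := lt_of_mul_lt_mul_left' (ha.trans_le hJL.self_of_nhds.1)
  filter_upwards [hJL, hLc.eventually_const_lt hL] with p hp hLp
  exact lt_of_mul_lt_mul_left' (hLp.trans_le hp.2)

theorem eventually_lt {J : P → ℝ≥0∞} (hJ : ContinuousAtUpTo C J p₀) (hC₀ : C ≠ 0) (hC : C ≠ ∞)
    {b b' : ℝ≥0∞} (hb : J p₀ < b) (hbb' : C * (C * b) < b') : ∀ᶠ p in 𝓝 p₀, J p < b' := by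
  obtain ⟨L, hLc, -, hJL⟩ := hJ
  have hL : L p₀ < C * b :=
    hJL.self_of_nhds.2.trans_lt ((ENNReal.mul_lt_mul_iff_right hC₀ hC).2 hb)
  filter_upwards [hJL, hLc.eventually_lt_const hL] with p hp hLp
  calc J p ≤ C * L p := hp.1
    _ ≤ C * (C * b) := by gcongr
    _ < b' := hbb'

end ContinuousAtUpTo

theorem exists_one_lt_rpow_mul_rpow_mul_lt {a b : ℝ≥0∞} (hab : a < b) (m : ℝ) :
    ∃ K : ℝ≥0, 1 < K ∧ (K : ℝ≥0∞) ^ m * ((K : ℝ≥0∞) ^ m * a) < b := by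
  have hpow : Tendsto (fun K : ℝ≥0 => (K : ℝ≥0∞) ^ m) (𝓝[>] 1) (𝓝 1) := by
    have := ((ENNReal.continuous_rpow_const (y := m)).comp ENNReal.continuous_coe).tendsto 1
    simp only [Function.comp_def, ENNReal.coe_one, ENNReal.one_rpow] at this
    exact this.mono_left nhdsWithin_le_nhds
  have hmul : Tendsto (fun K : ℝ≥0 => (K : ℝ≥0∞) ^ m * ((K : ℝ≥0∞) ^ m * a)) (𝓝[>] 1) (𝓝 a) := by
    simpa using ENNReal.Tendsto.mul hpow (.inl one_ne_zero)
      (ENNReal.Tendsto.mul_const hpow (.inl one_ne_zero)) (.inr ENNReal.one_ne_top)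
  exact (eventually_mem_nhdsWithin.and (hmul.eventually_lt_const hab)).exists

theorem continuousAt_of_forall_continuousAtUpTo {J : P → ℝ≥0∞} {m : ℝ}
    (hJ : ∀ K : ℝ≥0, 1 < K → ContinuousAtUpTo ((K : ℝ≥0∞) ^ m) J p₀) : ContinuousAt J p₀ := by
  refine tendsto_order.2 ⟨fun a ha => ?_, fun b' hb' => ?_⟩
  · obtain ⟨K, hK, hKa⟩ := exists_one_lt_rpow_mul_rpow_mul_lt ha m
    exact (hJ K hK).eventually_gt hKa
  · obtain ⟨b, hb, hbb'⟩ := exists_between hb'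
    obtain ⟨K, hK, hKb⟩ := exists_one_lt_rpow_mul_rpow_mul_lt hbb' m
    have hK₀ : (K : ℝ≥0∞) ≠ 0 := ENNReal.coe_ne_zero.2 (zero_lt_one.trans hK).ne'
    exact (hJ K hK).eventually_lt (ENNReal.rpow_pos hK₀.bot_lt ENNReal.coe_ne_top).ne'
      (ENNReal.rpow_ne_top_of_ne_zero hK₀ ENNReal.coe_ne_top) hb hKb

theorem continuousAt_toReal_of_forall_continuousAtUpTo {J : P → ℝ≥0∞} {m : ℝ}
    (hJ : ∀ K : ℝ≥0, 1 < K → ContinuousAtUpTo ((K : ℝ≥0∞) ^ m) J p₀) :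
    ContinuousAt (fun p => (J p).toReal) p₀ := by
  have hfin : J p₀ ≠ ∞ :=
    (hJ 2 one_lt_two).ne_top (ENNReal.rpow_ne_top_of_ne_zero (by simp) ENNReal.coe_ne_top)
  exact (ENNReal.tendsto_toReal hfin).comp (continuousAt_of_forall_continuousAtUpTo hJ)

theorem continuousAtUpTo_lintegral_of_parametrization [FirstCountableTopology P]
    {E F : Type*} [EMetricSpace E] [MeasurableSpace E] [BorelSpace E]
    [EMetricSpace F] [MeasurableSpace F] [BorelSpace F] {m : ℝ} (hm : 0 ≤ m)
    [IsFiniteMeasure (μH[m] : Measure F)] {K : ℝ≥0} {s : P → F → E}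
    (hs : ∀ᶠ p in 𝓝 p₀, LipschitzWith K (s p) ∧ AntilipschitzWith K (s p))
    {h : P → E → ℝ≥0} (hh : ∀ p, Measurable (h p))
    (hsupp : ∀ᶠ p in 𝓝 p₀, support (h p) ⊆ range (s p))
    (hbdd : ∃ M, ∀ᶠ p in 𝓝 p₀, ∀ x, h p x ≤ M)
    (hlim : ∀ᵐ w ∂(μH[m] : Measure F), ContinuousAt (fun p => h p (s p w)) p₀) :
    ContinuousAtUpTo ((K : ℝ≥0∞) ^ m) (fun p => ∫⁻ x, h p x ∂μH[m]) p₀ := by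
  obtain ⟨M, hM⟩ := hbdd
  have hMfin : ∫⁻ _ : F, (M : ℝ≥0∞) ∂μH[m] ≠ ∞ := by
    rw [lintegral_const]
    exact ENNReal.mul_ne_top ENNReal.coe_ne_top (measure_ne_top _ _)
  refine ⟨fun p => ∫⁻ w, h p (s p w) ∂μH[m], ?_, ?_, ?_⟩
  · refine tendsto_lintegral_filter_of_dominated_convergence (fun _ => (M : ℝ≥0∞)) ?_ ?_ hMfin ?_
    · filter_upwards [hs] with p hp
      exact ((hh p).comp hp.1.continuous.measurable).coe_nnreal_ennreal
    · filter_upwards [hM] with p hp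
      exact .of_forall fun w => ENNReal.coe_le_coe.2 (hp _)
    · filter_upwards [hlim] with w hw
      exact ENNReal.tendsto_coe.2 hw
  · exact ne_top_of_le_ne_top hMfin
      (lintegral_mono fun w => ENNReal.coe_le_coe.2 (hM.self_of_nhds _))
  · filter_upwards [hs, hsupp] with p ⟨hlip, hanti⟩ hp
    refine ⟨lintegral_hausdorffMeasure_le_of_lipschitzWith hlip hm
      (hh p).coe_nnreal_ennreal ?_, lintegral_comp_hausdorffMeasure_le_of_antilipschitzWith hanti
      hlip.continuous.measurable hm (hh p).coe_nnreal_ennreal⟩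
    exact fun x hx => hp (ENNReal.coe_ne_zero.1 hx)

theorem continuousAtUpTo_lintegral_of_locally {E : Type*} [MetricSpace E] [MeasurableSpace E]
    [BorelSpace E] {μ : Measure E} {X : Set E} (hX : IsCompact X) {h : P → E → ℝ≥0}
    (hh : ∀ p, Measurable (h p)) (hsupp : ∀ p, support (h p) ⊆ X)
    (hloc : ∀ x₀ ∈ X, ∃ U ∈ 𝓝 x₀, ∀ χ : E → ℝ≥0, Continuous χ → support χ ⊆ U → (∀ x, χ x ≤ 1) →
      ContinuousAtUpTo C (fun p => ∫⁻ x, (χ x * h p x : ℝ≥0) ∂μ) p₀) :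
    ContinuousAtUpTo C (fun p => ∫⁻ x, h p x ∂μ) p₀ := by
  choose! U hU hloc using hloc
  obtain ⟨t, htX, htc⟩ := hX.elim_nhds_subcover (fun x => interior (U x))
    fun x hx => interior_mem_nhds.2 (hU x hx)
  obtain ⟨χ, hχ⟩ := PartitionOfUnity.exists_isSubordinate hX.isClosed
    (fun z : t => interior (U z)) (fun _ => isOpen_interior)
    (by simpa only [iUnion_subtype] using htc)
  have hsum : ∀ p, ∫⁻ x, h p x ∂μ = ∑ z : t, ∫⁻ x, ((χ z x).toNNReal * h p x : ℝ≥0) ∂μ := by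
    intro p
    rw [← lintegral_finsetSum _ fun z _ => by fun_prop]
    refine lintegral_congr fun x => ?_
    by_cases hx : x ∈ X
    · have hone : ∑ z : t, (χ z x).toNNReal = 1 := by
        rw [← Real.toNNReal_sum_of_nonneg fun z _ => χ.nonneg z x, ← finsum_eq_sum_of_fintype,
          χ.sum_eq_one hx, Real.toNNReal_one]
      rw [← ENNReal.ofNNReal_finsetSum, ← Finset.sum_mul, hone, one_mul]
    · simp [notMem_support.1 fun hx' => hx (hsupp p hx')]
  simp only [hsum]
  refine .finsetSum fun z _ => hloc z (htX z z.2) _ (by fun_prop) (fun x hx => ?_) fun x => ?_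
  · have hne : χ z x ≠ 0 := fun h0 => hx (by simp [h0])
    exact interior_subset (hχ z (subset_tsupport _ hne))
  · exact Real.toNNReal_le_one.2 (χ.le_one z x)

end ContinuousUpTo

section ZeroSection

open scoped InnerProductSpace

variable {E : Type*} [NormedAddCommGroup E] [InnerProductSpace ℝ E]
  {F : E → ℝ} {e x₀ : E} {r : ℝ} {ε : ℝ≥0}

theorem norm_le_abs_inner_add_norm_orthogonalProjectionOnto (he : ‖e‖ = 1) (v : E) :
    ‖v‖ ≤ |⟪e, v⟫_ℝ| + ‖(ℝ ∙ e)ᗮ.orthogonalProjectionOnto v‖ := by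
  calc ‖v‖ = ‖(ℝ ∙ e).starProjection v + (ℝ ∙ e)ᗮ.starProjection v‖ := by
        rw [Submodule.starProjection_add_starProjection_orthogonal]
    _ ≤ ‖(ℝ ∙ e).starProjection v‖ + ‖(ℝ ∙ e)ᗮ.starProjection v‖ := norm_add_le _ _
    _ = |⟪e, v⟫_ℝ| + ‖(ℝ ∙ e)ᗮ.orthogonalProjectionOnto v‖ := by
        rw [Submodule.starProjection_unit_singleton ℝ he, norm_smul, he, mul_one,
          Real.norm_eq_abs, Submodule.starProjection_apply, Submodule.coe_norm]

theorem one_sub_mul_norm_sub_le_of_approximatesLinearOn (he : ‖e‖ = 1) {A : Set E}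
    (hF : ApproximatesLinearOn F (innerSL ℝ e) A ε) {x y : E} (hx : x ∈ A) (hy : y ∈ A) :
    (1 - ε) * ‖x - y‖ ≤ |F x - F y| + ‖(ℝ ∙ e)ᗮ.orthogonalProjectionOnto (x - y)‖ := by
  have happrox : |F x - F y - ⟪e, x - y⟫_ℝ| ≤ ε * ‖x - y‖ := by
    simpa only [Real.norm_eq_abs, innerSL_apply_apply] using hF x hx y hy
  have hinner : |⟪e, x - y⟫_ℝ| ≤ |F x - F y| + |F x - F y - ⟪e, x - y⟫_ℝ| := by
    simpa only [sub_sub_cancel] using abs_sub (F x - F y) (F x - F y - ⟪e, x - y⟫_ℝ)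
  linarith [norm_le_abs_inner_add_norm_orthogonalProjectionOnto he (x - y)]

theorem exists_eq_zero_of_approximatesLinearOn (he : ‖e‖ = 1)
    (hF : ApproximatesLinearOn F (innerSL ℝ e) (ball x₀ (2 * r)) ε) (hε : ε ≤ 1 / 4)
    (hF₀ : |F x₀| < r / 4) {w : (ℝ ∙ e)ᗮ} (hw : ‖w‖ < r) :
    ∃ x ∈ ball x₀ (2 * r), F x = 0 ∧ (ℝ ∙ e)ᗮ.orthogonalProjectionOnto (x - x₀) = w := by
  have hr : 0 < r := (norm_nonneg w).trans_lt hw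
  have hwe : ⟪e, (w : E)⟫_ℝ = 0 := Submodule.mem_orthogonal_singleton_iff_inner_right.1 w.2
  let line : ℝ → E := fun t => x₀ + (w + t • e)
  have hnorm : ∀ t ∈ Icc (-r) r, ‖(w : E) + t • e‖ < 2 * r := by
    intro t ht
    have hte : ‖t • e‖ ≤ r := by simpa [norm_smul, he] using abs_le.2 ht
    linarith [norm_add_le (w : E) (t • e), Submodule.coe_norm w]
  have hline : ∀ t ∈ Icc (-r) r, line t ∈ ball x₀ (2 * r) := by
    intro t ht
    simpa [line, mem_ball_iff_norm] using hnorm t ht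
  have happrox : ∀ t ∈ Icc (-r) r, |F (line t) - F x₀ - t| ≤ r / 2 := by
    intro t ht
    have := hF _ (hline t ht) x₀ (mem_ball_self (by linarith))
    simp only [line, add_sub_cancel_left, innerSL_apply_apply, inner_add_right, hwe,
      inner_smul_right, real_inner_self_eq_norm_sq, he, one_pow, mul_one, zero_add,
      Real.norm_eq_abs] at this
    have hε' : (ε : ℝ) ≤ 1 / 4 := by exact_mod_cast hε
    nlinarith [hε', hnorm t ht, norm_nonneg ((w : E) + t • e)]
  have hcont : ContinuousOn (fun t => F (line t)) (Icc (-r) r) :=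
    hF.continuousOn.comp (by fun_prop) hline
  have hzero : (0 : ℝ) ∈ Icc (F (line (-r))) (F (line r)) := by
    have hneg := abs_le.1 (happrox (-r) (by simp [hr.le]))
    have hpos := abs_le.1 (happrox r (by simp [hr.le]))
    have hF₀ := abs_lt.1 hF₀
    constructor <;> linarith
  obtain ⟨t, ht, hFt⟩ := intermediate_value_Icc (by linarith) hcont hzero
  refine ⟨line t, hline t ht, hFt, ?_⟩
  have hproj_e : (ℝ ∙ e)ᗮ.orthogonalProjectionOnto e = 0 :=
    Submodule.orthogonalProjectionOnto_orthogonal_apply_eq_zero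
      (Submodule.mem_span_singleton_self e)
  simp [line, hproj_e]

/-- `s` parametrizes the zeros of `F` near `x₀` as a graph over the ball of radius `r` in the
hyperplane through `x₀` orthogonal to `e`. The radius `2 * r` leaves room for the graph to leave
the hyperplane. -/
def IsZeroSection (F : E → ℝ) (x₀ e : E) (r : ℝ) (s : ball (0 : (ℝ ∙ e)ᗮ) r → E) : Prop :=
  ∀ w, s w ∈ ball x₀ (2 * r) ∧ F (s w) = 0 ∧
    (ℝ ∙ e)ᗮ.orthogonalProjectionOnto (s w - x₀) = w

theorem exists_isZeroSection (he : ‖e‖ = 1)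
    (hF : ApproximatesLinearOn F (innerSL ℝ e) (ball x₀ (2 * r)) ε) (hε : ε ≤ 1 / 4)
    (hF₀ : |F x₀| < r / 4) : ∃ s, IsZeroSection F x₀ e r s := by
  choose s hs using fun w : ball (0 : (ℝ ∙ e)ᗮ) r =>
    exists_eq_zero_of_approximatesLinearOn he hF hε hF₀ (mem_ball_zero_iff.1 w.2)
  exact ⟨s, hs⟩

theorem exists_eventually_isZeroSection {P : Type*} [TopologicalSpace P] {p₀ : P} {f : P → E → ℝ}
    (he : ‖e‖ = 1) (hr : 0 < r) (hε : ε ≤ 1 / 4)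
    (hf : ∀ᶠ p in 𝓝 p₀, ApproximatesLinearOn (f p) (innerSL ℝ e) (ball x₀ (2 * r)) ε)
    (hf₀ : f p₀ x₀ = 0) (hcont : ContinuousAt (fun p => f p x₀) p₀) :
    ∃ s : P → ball (0 : (ℝ ∙ e)ᗮ) r → E, ∀ᶠ p in 𝓝 p₀, IsZeroSection (f p) x₀ e r (s p) := by
  have hsmall : ∀ᶠ p in 𝓝 p₀, |f p x₀| < r / 4 :=
    hcont.abs.eventually_lt_const (by simpa [hf₀] using hr)
  refine Eventually.choice ?_
  filter_upwards [hf, hsmall] with p hfp hp using exists_isZeroSection he hfp hε hp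

namespace IsZeroSection

variable {s : ball (0 : (ℝ ∙ e)ᗮ) r → E}

theorem orthogonalProjectionOnto_sub {F' : E → ℝ} {s' : ball (0 : (ℝ ∙ e)ᗮ) r → E}
    (hs : IsZeroSection F x₀ e r s) (hs' : IsZeroSection F' x₀ e r s')
    (w w' : ball (0 : (ℝ ∙ e)ᗮ) r) :
    (ℝ ∙ e)ᗮ.orthogonalProjectionOnto (s w - s' w') = (w - w' : (ℝ ∙ e)ᗮ) := by
  rw [← sub_sub_sub_cancel_right _ _ x₀, map_sub, (hs w).2.2, (hs' w').2.2]

theorem antilipschitzWith_one (hs : IsZeroSection F x₀ e r s) : AntilipschitzWith 1 s := by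
  refine AntilipschitzWith.of_le_mul_dist fun w w' => ?_
  rw [NNReal.coe_one, one_mul, Subtype.dist_eq, dist_eq_norm, dist_eq_norm,
    ← hs.orthogonalProjectionOnto_sub hs]
  exact (ℝ ∙ e)ᗮ.norm_orthogonalProjectionOnto_apply_le _

theorem lipschitzWith (hs : IsZeroSection F x₀ e r s) (he : ‖e‖ = 1)
    (hF : ApproximatesLinearOn F (innerSL ℝ e) (ball x₀ (2 * r)) ε) {K : ℝ≥0}
    (hK : 1 ≤ K * (1 - ε : ℝ)) : LipschitzWith K s := by
  refine LipschitzWith.of_dist_le_mul fun w w' => ?_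
  have hkey := one_sub_mul_norm_sub_le_of_approximatesLinearOn he hF (hs w).1 (hs w').1
  rw [(hs w).2.1, (hs w').2.1, sub_self, abs_zero, zero_add,
    hs.orthogonalProjectionOnto_sub hs] at hkey
  rw [Subtype.dist_eq, dist_eq_norm, dist_eq_norm]
  calc ‖s w - s w'‖ ≤ K * (1 - ε) * ‖s w - s w'‖ := le_mul_of_one_le_left (norm_nonneg _) hK
    _ = K * ((1 - ε) * ‖s w - s w'‖) := mul_assoc _ _ _
    _ ≤ K * ‖(w - w' : (ℝ ∙ e)ᗮ)‖ := by gcongr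

theorem mem_range (hs : IsZeroSection F x₀ e r s) (he : ‖e‖ = 1)
    (hF : ApproximatesLinearOn F (innerSL ℝ e) (ball x₀ (2 * r)) ε) (hε : ε < 1) {x : E}
    (hx : x ∈ ball x₀ r) (hFx : F x = 0) : x ∈ range s := by
  have hQ : ‖(ℝ ∙ e)ᗮ.orthogonalProjectionOnto (x - x₀)‖ < r :=
    ((ℝ ∙ e)ᗮ.norm_orthogonalProjectionOnto_apply_le _).trans_lt (mem_ball_iff_norm.1 hx)
  have hr : 0 < r := dist_nonneg.trans_lt hx
  let w : ball (0 : (ℝ ∙ e)ᗮ) r := ⟨_, mem_ball_zero_iff.2 hQ⟩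
  have hkey := one_sub_mul_norm_sub_le_of_approximatesLinearOn he hF (hs w).1
    (ball_subset_ball (by linarith) hx)
  have hproj : (ℝ ∙ e)ᗮ.orthogonalProjectionOnto (s w - x) = 0 := by
    rw [← sub_sub_sub_cancel_right _ _ x₀, map_sub, (hs w).2.2, sub_self]
  rw [(hs w).2.1, hFx, hproj, sub_self, abs_zero, norm_zero, add_zero] at hkey
  have hε' : (ε : ℝ) < 1 := by exact_mod_cast hε
  exact ⟨w, sub_eq_zero.1 (norm_le_zero_iff.1 (by nlinarith [hε']))⟩

theorem continuousAt {P : Type*} [TopologicalSpace P] {p₀ : P} {f : P → E → ℝ}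
    {s : P → ball (0 : (ℝ ∙ e)ᗮ) r → E} (hs : ∀ᶠ p in 𝓝 p₀, IsZeroSection (f p) x₀ e r (s p))
    (he : ‖e‖ = 1) (hε : ε < 1)
    (hf : ∀ᶠ p in 𝓝 p₀, ApproximatesLinearOn (f p) (innerSL ℝ e) (ball x₀ (2 * r)) ε)
    {w : ball (0 : (ℝ ∙ e)ᗮ) r} (hcont : ContinuousAt (fun p => f p (s p₀ w)) p₀) :
    ContinuousAt (fun p => s p w) p₀ := by
  have hs₀ := hs.self_of_nhds
  have hε' : 0 < (1 - ε : ℝ) := sub_pos.2 (by exact_mod_cast hε)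
  have hbound : ∀ᶠ p in 𝓝 p₀, ‖s p w - s p₀ w‖ ≤ (1 - ε : ℝ)⁻¹ * |f p (s p₀ w)| := by
    filter_upwards [hs, hf] with p hsp hfp
    have hkey := one_sub_mul_norm_sub_le_of_approximatesLinearOn he hfp (hsp w).1 (hs₀ w).1
    rw [(hsp w).2.1, hsp.orthogonalProjectionOnto_sub hs₀, zero_sub, abs_neg, sub_self,
      norm_zero, add_zero] at hkey
    exact (le_inv_mul_iff₀ hε').2 hkey
  refine tendsto_iff_norm_sub_tendsto_zero.2 <|
    squeeze_zero' (.of_forall fun _ => norm_nonneg _) hbound ?_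
  simpa only [ContinuousAt, (hs₀ w).2.1, abs_zero, mul_zero] using
    hcont.abs.const_mul (1 - ε : ℝ)⁻¹

end IsZeroSection

end ZeroSection

section LevelSetIntegral

open Module

theorem eventually_approximatesLinearOn_of_continuousAt {P E F : Type*} [TopologicalSpace P]
    [NormedAddCommGroup E] [NormedSpace ℝ E] [NormedAddCommGroup F] [NormedSpace ℝ F]
    {f : P → E → F} {f' : P → E → E →L[ℝ] F} {p₀ : P} {x₀ : E}
    (hf : ∀ᶠ q in 𝓝 (p₀, x₀), HasFDerivAt (f q.1) (f' q.1 q.2) q.2)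
    (hf' : ContinuousAt (uncurry f') (p₀, x₀)) {ε : ℝ≥0} (hε : 0 < ε) :
    ∀ᶠ r in 𝓝[>] 0, ∀ᶠ p in 𝓝 p₀, ApproximatesLinearOn (f p) (f' p₀ x₀) (ball x₀ r) ε := by
  have hclose : ∀ᶠ q in 𝓝 (p₀, x₀), ‖f' q.1 q.2 - f' p₀ x₀‖ < ε := by
    simpa only [dist_eq_norm, uncurry] using Metric.tendsto_nhds.1 hf' ε (by exact_mod_cast hε)
  obtain ⟨A, hA, B, hB, hAB⟩ := mem_nhds_prod_iff.1 (hf.and hclose)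
  obtain ⟨R, hR, hRB⟩ := Metric.mem_nhds_iff.1 hB
  filter_upwards [Ioo_mem_nhdsGT hR] with r hr
  filter_upwards [hA] with p hp x hx y hy
  have hmem : ∀ z ∈ ball x₀ r, (p, z) ∈ A ×ˢ B := fun z hz =>
    ⟨hp, hRB (ball_subset_ball hr.2.le hz)⟩
  exact (convex_ball x₀ r).norm_image_sub_le_of_norm_hasFDerivWithin_le'
    (fun z hz => (hAB (hmem z hz)).1.hasFDerivWithinAt)
    (fun z hz => (hAB (hmem z hz)).2.le) hy hx

theorem exists_nhds_eventually_eq_zero_of_ne_zero {P E R M : Type*} [TopologicalSpace P]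
    [TopologicalSpace E] [TopologicalSpace R] [T1Space R] [Zero R] [Zero M] {p₀ : P} {x₀ : E}
    {f : P → E → R} {h : P → E → M}
    (hcont : ContinuousAt (uncurry f) (p₀, x₀)) (hne : f p₀ x₀ ≠ 0)
    (hsupp : ∀ p, support (h p) ⊆ f p ⁻¹' {0}) :
    ∃ U ∈ 𝓝 x₀, ∀ᶠ p in 𝓝 p₀, ∀ x ∈ U, h p x = 0 := by
  obtain ⟨A, hA, U, hU, hAU⟩ := mem_nhds_prod_iff.1 (hcont.eventually_ne hne)
  refine ⟨U, hU, mem_of_superset hA fun p hp x hx => ?_⟩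
  by_contra hne
  exact hAU (mk_mem_prod hp hx) (hsupp p hne)

theorem exists_eq_norm_smul_innerSL {E : Type*} [NormedAddCommGroup E] [InnerProductSpace ℝ E]
    [CompleteSpace E] {ℓ : E →L[ℝ] ℝ} (hℓ : ℓ ≠ 0) :
    ∃ e : E, ‖e‖ = 1 ∧ ℓ = ‖ℓ‖ • innerSL ℝ e := by
  have hℓ' : ‖ℓ‖ ≠ 0 := norm_ne_zero_iff.2 hℓ
  refine ⟨‖ℓ‖⁻¹ • (InnerProductSpace.toDual ℝ E).symm ℓ, ?_, ?_⟩
  · simp [norm_smul, hℓ']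
  · ext v
    simp [hℓ']

variable {E : Type*} [NormedAddCommGroup E] [InnerProductSpace ℝ E] [FiniteDimensional ℝ E]

theorem cast_finrank_orthogonal_span_singleton {e : E} (he : e ≠ 0) :
    (finrank ℝ (ℝ ∙ e)ᗮ : ℝ) = finrank ℝ E - 1 := by
  rw [← (ℝ ∙ e).finrank_add_finrank_orthogonal, finrank_span_singleton he]
  push_cast
  ring

variable [MeasurableSpace E] [BorelSpace E]

theorem isFiniteMeasure_hausdorffMeasure_ball (x : E) (r : ℝ) :
    IsFiniteMeasure (μH[finrank ℝ E] : Measure (ball x r)) := by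
  refine ⟨?_⟩
  rw [← (isometry_subtype_coe (s := ball x r)).hausdorffMeasure_image (.inl (by positivity)),
    image_univ, Subtype.range_coe]
  exact measure_ball_lt_top

variable {P : Type*} [TopologicalSpace P] [FirstCountableTopology P] {p₀ : P} {x₀ : E}
  {f : P → E → ℝ} {K : ℝ≥0}

theorem continuousAtUpTo_lintegral_of_approximatesLinearOn {e : E} (he : ‖e‖ = 1) {r : ℝ}
    (hr : 0 < r) {ε : ℝ≥0} (hε : ε ≤ 1 / 4) (hK : 1 ≤ K * (1 - ε : ℝ))
    (hf : ∀ᶠ p in 𝓝 p₀, ApproximatesLinearOn (f p) (innerSL ℝ e) (ball x₀ (2 * r)) ε)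
    (hf₀ : f p₀ x₀ = 0) (hcont : ∀ x ∈ ball x₀ (2 * r), ContinuousAt (fun p => f p x) p₀)
    {h : P → E → ℝ≥0} (hh : ∀ p, Measurable (h p))
    (hsupp : ∀ p, support (h p) ⊆ ball x₀ r ∩ f p ⁻¹' {0})
    (hbdd : ∃ M, ∀ᶠ p in 𝓝 p₀, ∀ x, h p x ≤ M)
    (hlim : ∀ᵐ x ∂(μH[finrank ℝ (ℝ ∙ e)ᗮ] : Measure E), x ∈ ball x₀ (2 * r) → f p₀ x = 0 →
      ContinuousWithinAt (uncurry h) (uncurry f ⁻¹' {0}) (p₀, x)) :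
    ContinuousAtUpTo ((K : ℝ≥0∞) ^ (finrank ℝ (ℝ ∙ e)ᗮ : ℝ))
      (fun p => ∫⁻ x, h p x ∂μH[finrank ℝ (ℝ ∙ e)ᗮ]) p₀ := by
  have hε' : ε < 1 := hε.trans_lt (by norm_num [← NNReal.coe_lt_coe])
  have hK' : 1 ≤ K := by
    refine NNReal.coe_le_coe.1 (hK.trans ?_)
    exact mul_le_of_le_one_right K.2 (sub_le_self _ ε.2)
  obtain ⟨s, hs⟩ := exists_eventually_isZeroSection he hr hε hf hf₀
    (hcont x₀ (mem_ball_self (by positivity)))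
  have hs₀ := hs.self_of_nhds
  have := isFiniteMeasure_hausdorffMeasure_ball (0 : (ℝ ∙ e)ᗮ) r
  refine continuousAtUpTo_lintegral_of_parametrization (by positivity) (s := s) ?_ hh ?_ hbdd ?_
  · filter_upwards [hs, hf] with p hsp hfp
    refine ⟨hsp.lipschitzWith he hfp hK, fun w w' => (hsp.antilipschitzWith_one w w').trans ?_⟩
    gcongr
  · filter_upwards [hs, hf] with p hsp hfp x hx
    exact hsp.mem_range he hfp hε' (hsupp p hx).1 (hsupp p hx).2
  · filter_upwards [ae_hausdorffMeasure_comp_of_antilipschitzWith hs₀.antilipschitzWith_one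
      (by positivity) hlim] with w hw
    have hsw : ContinuousAt (fun p => s p w) p₀ :=
      IsZeroSection.continuousAt hs he hε' hf (hcont _ (hs₀ w).1)
    exact (hw (hs₀ w).1 (hs₀ w).2.1).tendsto.comp (tendsto_nhdsWithin_iff.2
      ⟨continuousAt_id.prodMk_nhds hsw, hs.mono fun p hp => (hp w).2.1⟩)

theorem exists_le_one_div_four_one_le_mul_one_sub (hK : 1 < K) :
    ∃ ε : ℝ≥0, 0 < ε ∧ ε ≤ 1 / 4 ∧ 1 ≤ K * (1 - ε : ℝ) := by
  have hlim : Tendsto (fun ε : ℝ≥0 => K * (1 - ε : ℝ)) (𝓝[>] 0) (𝓝 K) := by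
    have : Continuous fun ε : ℝ≥0 => K * (1 - ε : ℝ) := by fun_prop
    simpa using (this.tendsto 0).mono_left nhdsWithin_le_nhds
  have hev := (hlim.eventually_const_lt (NNReal.one_lt_coe.2 hK)).and
    (Ioc_mem_nhdsGT (show (0 : ℝ≥0) < 1 / 4 by positivity))
  obtain ⟨ε, hε, hε'⟩ := hev.exists
  exact ⟨ε, hε'.1, hε'.2, hε.le⟩

theorem exists_nhds_continuousAtUpTo_lintegral {f' : P → E → E →L[ℝ] ℝ} {Ω : Set E}
    (hΩ : Ω ∈ 𝓝 x₀) (hf : ∀ᶠ q in 𝓝 (p₀, x₀), HasFDerivAt (f q.1) (f' q.1 q.2) q.2)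
    (hf' : ContinuousAt (uncurry f') (p₀, x₀)) (hf₀ : f p₀ x₀ = 0) (hf'₀ : f' p₀ x₀ ≠ 0)
    (hcont : ∀ x ∈ Ω, ContinuousAt (fun p => f p x) p₀) (hK : 1 < K) :
    ∃ U ∈ 𝓝 x₀, ∀ h : P → E → ℝ≥0, (∀ p, Measurable (h p)) →
      (∀ p, support (h p) ⊆ U ∩ f p ⁻¹' {0}) → (∃ M, ∀ᶠ p in 𝓝 p₀, ∀ x, h p x ≤ M) →
      (∀ᵐ x ∂(μH[(finrank ℝ E : ℝ) - 1] : Measure E), x ∈ Ω → f p₀ x = 0 →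
        ContinuousWithinAt (uncurry h) (uncurry f ⁻¹' {0}) (p₀, x)) →
      ContinuousAtUpTo ((K : ℝ≥0∞) ^ ((finrank ℝ E : ℝ) - 1))
        (fun p => ∫⁻ x, h p x ∂μH[(finrank ℝ E : ℝ) - 1]) p₀ := by
  obtain ⟨e, he, hf'e⟩ := exists_eq_norm_smul_innerSL hf'₀
  obtain ⟨ε, hε₀, hε, hKε⟩ := exists_le_one_div_four_one_le_mul_one_sub hK
  set c := ‖f' p₀ x₀‖
  have hc : c ≠ 0 := norm_ne_zero_iff.2 hf'₀
  let g : P → E → ℝ := fun p x => c⁻¹ * f p x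
  have hg₀ : ∀ p x, g p x = 0 ↔ f p x = 0 := fun p x => by simp [g, hc]
  have hgf : uncurry g ⁻¹' {0} = uncurry f ⁻¹' {0} := Set.ext fun q => hg₀ q.1 q.2
  have hg := eventually_approximatesLinearOn_of_continuousAt (f := g)
    (f' := fun p x => c⁻¹ • f' p x) (hf.mono fun q hq => hq.const_mul c⁻¹)
    (hf'.const_smul c⁻¹) hε₀
  rw [hf'e, inv_smul_smul₀ hc] at hg
  have hball := (eventually_ball_subset hΩ).filter_mono (nhdsWithin_le_nhds (s := Ioi 0))
  obtain ⟨R, ⟨hgR, hRΩ⟩, hR⟩ := ((hg.and hball).and self_mem_nhdsWithin).exists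
  obtain ⟨r, rfl⟩ : ∃ r, R = 2 * r := ⟨R / 2, by ring⟩
  have hr : 0 < r := by simpa using hR
  refine ⟨ball x₀ r, ball_mem_nhds x₀ hr, fun h hh hsupp hbdd hlim => ?_⟩
  rw [← cast_finrank_orthogonal_span_singleton (norm_ne_zero_iff.1 (he ▸ one_ne_zero))] at hlim ⊢
  refine continuousAtUpTo_lintegral_of_approximatesLinearOn (f := g) he hr hε hKε hgR
    ((hg₀ _ _).2 hf₀) (fun x hx => (hcont x (hRΩ hx)).const_mul _) hh
    (fun p x hx => ⟨(hsupp p hx).1, (hg₀ _ _).2 (hsupp p hx).2⟩) hbdd ?_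
  rw [hgf]
  exact hlim.mono fun x hx hxb hgx => hx (hRΩ hxb) ((hg₀ _ _).1 hgx)

theorem exists_nhds_continuousAtUpTo_lintegral_mul {f' : P → E → E →L[ℝ] ℝ} {Ω : Set E}
    (hΩ : Ω ∈ 𝓝 x₀) (hf : ∀ᶠ q in 𝓝 (p₀, x₀), HasFDerivAt (f q.1) (f' q.1 q.2) q.2)
    (hf' : ContinuousAt (uncurry f') (p₀, x₀)) (hf₀ : f p₀ x₀ = 0) (hf'₀ : f' p₀ x₀ ≠ 0)
    (hcont : ∀ x ∈ Ω, ContinuousAt (fun p => f p x) p₀) {h : P → E → ℝ≥0}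
    (hh : ∀ p, Measurable (h p)) (hsupp : ∀ p, support (h p) ⊆ f p ⁻¹' {0})
    (hbdd : IsBoundedUnder (· ≤ ·) (𝓝 (p₀, x₀)) (uncurry h))
    (hlim : ∀ᵐ x ∂(μH[(finrank ℝ E : ℝ) - 1] : Measure E), x ∈ Ω → f p₀ x = 0 →
      ContinuousWithinAt (uncurry h) (uncurry f ⁻¹' {0}) (p₀, x)) (hK : 1 < K) :
    ∃ U ∈ 𝓝 x₀, ∀ χ : E → ℝ≥0, Continuous χ → support χ ⊆ U → (∀ x, χ x ≤ 1) →
      ContinuousAtUpTo ((K : ℝ≥0∞) ^ ((finrank ℝ E : ℝ) - 1))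
        (fun p => ∫⁻ x, (χ x * h p x : ℝ≥0) ∂μH[(finrank ℝ E : ℝ) - 1]) p₀ := by
  obtain ⟨M, hM⟩ := hbdd
  obtain ⟨A, hA, B, hB, hAB⟩ := mem_nhds_prod_iff.1 (eventually_map.1 hM)
  obtain ⟨V, hV, hVloc⟩ := exists_nhds_continuousAtUpTo_lintegral hΩ hf hf' hf₀ hf'₀ hcont hK
  refine ⟨V ∩ B, inter_mem hV hB, fun χ hχ hχsupp hχ₁ => hVloc (fun p x => χ x * h p x)
    (fun p => hχ.measurable.mul (hh p)) (fun p x hx => ?_) ⟨M, ?_⟩ ?_⟩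
  · exact ⟨(hχsupp (left_ne_zero_of_mul hx)).1, hsupp p (right_ne_zero_of_mul hx)⟩
  · filter_upwards [hA] with p hp x
    by_cases hx : x ∈ B
    · exact mul_le_of_le_one_of_le (hχ₁ x) (hAB (mk_mem_prod hp hx))
    · have hχx : χ x = 0 := notMem_support.1 fun hx' => hx (hχsupp hx').2
      simp [hχx]
  · filter_upwards [hlim] with x hx hxΩ hfx
    exact (hχ.comp continuous_snd).continuousWithinAt.mul (hx hxΩ hfx)

theorem continuousAtUpTo_lintegral_of_levelSet {f' : P → E → E →L[ℝ] ℝ} {Ω X : Set E}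
    (hΩ : IsOpen Ω) (hX : IsCompact X) (hXΩ : X ⊆ Ω)
    (hf : ∀ p, ∀ x ∈ Ω, HasFDerivAt (f p) (f' p x) x)
    (hfc : ∀ x ∈ Ω, ContinuousAt (uncurry f) (p₀, x))
    (hf'c : ∀ x ∈ Ω, ContinuousAt (uncurry f') (p₀, x))
    (hf' : ∀ x ∈ Ω, f p₀ x = 0 → f' p₀ x ≠ 0) {h : P → E → ℝ≥0}
    (hh : ∀ p, Measurable (h p)) (hsupp : ∀ p, support (h p) ⊆ X ∩ f p ⁻¹' {0})
    (hbdd : ∀ x ∈ X, f p₀ x = 0 → IsBoundedUnder (· ≤ ·) (𝓝 (p₀, x)) (uncurry h))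
    (hlim : ∀ᵐ x ∂(μH[(finrank ℝ E : ℝ) - 1] : Measure E), x ∈ Ω → f p₀ x = 0 →
      ContinuousWithinAt (uncurry h) (uncurry f ⁻¹' {0}) (p₀, x)) (hK : 1 < K) :
    ContinuousAtUpTo ((K : ℝ≥0∞) ^ ((finrank ℝ E : ℝ) - 1))
      (fun p => ∫⁻ x, h p x ∂μH[(finrank ℝ E : ℝ) - 1]) p₀ := by
  have hsupp₀ := fun p => (hsupp p).trans inter_subset_right
  refine continuousAtUpTo_lintegral_of_locally hX hh
    (fun p => (hsupp p).trans inter_subset_left) fun x₀ hx₀ => ?_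
  have hΩx₀ := hΩ.mem_nhds (hXΩ hx₀)
  by_cases hf₀ : f p₀ x₀ = 0
  · refine exists_nhds_continuousAtUpTo_lintegral_mul hΩx₀ ?_ (hf'c x₀ (hXΩ hx₀)) hf₀
      (hf' x₀ (hXΩ hx₀) hf₀) (fun x hx => (hfc x hx).comp (f := fun p => (p, x)) (by fun_prop))
      hh hsupp₀ (hbdd x₀ hx₀ hf₀) hlim hK
    filter_upwards [continuous_snd.continuousAt.preimage_mem_nhds hΩx₀] with q hq
    exact hf q.1 q.2 hq
  · obtain ⟨U, hU, hzero⟩ :=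
      exists_nhds_eventually_eq_zero_of_ne_zero (hfc x₀ (hXΩ hx₀)) hf₀ hsupp₀
    refine ⟨U, hU, fun χ _ hχU _ => .of_eventually_eq_zero ?_⟩
    filter_upwards [hzero] with p hp
    have hmul : ∀ x, χ x * h p x = 0 := fun x => by
      by_cases hx : x ∈ U
      · rw [hp x hx, mul_zero]
      · rw [notMem_support.1 fun hx' => hx (hχU hx'), zero_mul]
    simp [hmul]

end LevelSetIntegral

theorem eventually_forall_le_iff_of_forall_ne {ι T R : Type*} [Finite ι] [TopologicalSpace T]
    [TopologicalSpace R] [LinearOrder R] [OrderClosedTopology R] {u : ι → T → R} {t₀ : T}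
    {i j : ι} (hu : ∀ k, ContinuousAt (u k) t₀)
    (hne : ∀ k, k ≠ i → k ≠ j → u k t₀ ≠ u i t₀) (hij : u j t₀ = u i t₀) :
    ∀ᶠ t in 𝓝[{t | u j t = u i t}] t₀, (∀ k, u k t ≤ u i t) ↔ ∀ k, u k t₀ ≤ u i t₀ := by
  have hstable : ∀ k, ∀ᶠ t in 𝓝[{t | u j t = u i t}] t₀, u k t ≤ u i t ↔ u k t₀ ≤ u i t₀ := by
    intro k
    by_cases hki : k = i
    · simp [hki]
    by_cases hkj : k = j
    · filter_upwards [self_mem_nhdsWithin] with t ht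
      simp only [hkj, ht.le, hij.le]
    refine Eventually.filter_mono nhdsWithin_le_nhds ?_
    rcases (hne k hki hkj).lt_or_gt with hlt | hgt
    · filter_upwards [(hu k).eventually_lt (hu i) hlt] with t ht
      simp only [ht.le, hlt.le]
    · filter_upwards [(hu i).eventually_lt (hu k) hgt] with t ht
      simp only [ht.not_ge, hgt.not_ge]
  filter_upwards [eventually_all.2 hstable] with t ht
  exact forall_congr' ht

theorem continuousOn_uncurry_of_continuousOn_partial {E : Type*} [NormedAddCommGroup E]
    [InnerProductSpace ℝ E] [CompleteSpace E] {Ω : Set E} (hΩ : IsOpen Ω) {g : E → ℝ → ℝ}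
    {gx : E → ℝ → E} {gv : E → ℝ → ℝ}
    (hgx : ∀ x ∈ Ω, ∀ v, HasGradientAt (fun x' => g x' v) (gx x v) x)
    (hgv : ∀ x ∈ Ω, ∀ v, HasDerivAt (g x) (gv x v) v)
    (hgxc : ContinuousOn (uncurry gx) (Ω ×ˢ univ))
    (hgvc : ContinuousOn (uncurry gv) (Ω ×ˢ univ)) :
    ContinuousOn (uncurry g) (Ω ×ˢ univ) := by
  intro q hq
  have hnhds : Ω ×ˢ univ ∈ 𝓝 q := (hΩ.prod isOpen_univ).mem_nhds hq
  refine (hasStrictFDerivAt_uncurry_coprod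
    (f₁ := fun x v => InnerProductSpace.toDual ℝ E (gx x v))
    (f₂ := fun x v => ContinuousLinearMap.toSpanSingleton ℝ (gv x v))
    ?_ ?_ ?_ ?_).continuousAt.continuousWithinAt
  · filter_upwards [hnhds] with z hz using (hgx z.1 hz.1 z.2).hasFDerivAt
  · filter_upwards [hnhds] with z hz using (hgv z.1 hz.1 z.2).hasFDerivAt
  · exact (InnerProductSpace.toDual ℝ E).continuous.continuousAt.comp (hgxc.continuousAt hnhds)
  · exact (ContinuousLinearMap.toSpanSingletonCLE).continuous.continuousAt.comp
      (hgvc.continuousAt hnhds)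

section Laguerre

variable {Ω : Set (EuclideanSpace ℝ (Fin d))} {G : EuclideanSpace ℝ (Fin d) → Fin N → ℝ → ℝ}
  {ψ : Fin N → ℝ} {x : EuclideanSpace ℝ (Fin d)} {i j : Fin N}

theorem continuousAt_eval_potential {Z : Type*} [TopologicalSpace Z] (hΩ : IsOpen Ω)
    {g : EuclideanSpace ℝ (Fin d) → Fin N → ℝ → Z} {k : Fin N}
    (hg : ContinuousOn (fun q : EuclideanSpace ℝ (Fin d) × ℝ => g q.1 k q.2) (Ω ×ˢ univ))
    (hx : x ∈ Ω) :
    ContinuousAt (fun q : (Fin N → ℝ) × EuclideanSpace ℝ (Fin d) => g q.2 k (q.1 k)) (ψ, x) := by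
  have hpair : ContinuousAt (fun q : (Fin N → ℝ) × EuclideanSpace ℝ (Fin d) => (q.2, q.1 k))
      (ψ, x) := by fun_prop
  exact (hg.continuousAt ((hΩ.prod isOpen_univ).mem_nhds ⟨hx, mem_univ (ψ k)⟩)).comp hpair

theorem mem_Lag_inter_Lag_iff :
    x ∈ Lag Ω G ψ i ∩ Lag Ω G ψ j ↔ x ∈ Lag Ω G ψ i ∧ G x j (ψ j) = G x i (ψ i) := by
  refine ⟨fun hx => ⟨hx.1, (hx.1.2 j).antisymm (hx.2.2 i)⟩, fun hx => ⟨hx.1, hx.1.1, fun k => ?_⟩⟩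
  exact (hx.1.2 k).trans_eq hx.2.symm

theorem support_indicator_Lag_inter_Lag_subset {M : Type*} [Zero M]
    (g : EuclideanSpace ℝ (Fin d) → M) :
    support ((Lag Ω G ψ i ∩ Lag Ω G ψ j).indicator g) ⊆
      support g ∩ {x | G x j (ψ j) = G x i (ψ i)} := fun x hx => by
  obtain ⟨hxL, hgx⟩ := indicator_apply_ne_zero.1 hx
  exact ⟨hgx, (mem_Lag_inter_Lag_iff.1 hxL).2⟩

theorem measurableSet_Lag (hΩ : IsOpen Ω)
    (hG : ∀ k, ContinuousOn (fun q : EuclideanSpace ℝ (Fin d) × ℝ => G q.1 k q.2) (Ω ×ˢ univ)) :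
    MeasurableSet (Lag Ω G ψ i) := by
  have hGψ : ∀ k, ContinuousOn (fun x => G x k (ψ k)) Ω := fun k =>
    (hG k).comp (f := fun x => (x, ψ k)) (by fun_prop) fun x hx => ⟨hx, mem_univ _⟩
  have hclosed : ∀ k, ∃ A, IsClosed A ∧
      (fun x => G x i (ψ i) - G x k (ψ k)) ⁻¹' Ici 0 ∩ Ω = A ∩ Ω := fun k =>
    continuousOn_iff_isClosed.1 ((hGψ i).sub (hGψ k)) _ isClosed_Ici
  choose A hA hAΩ using hclosed
  have hLag : Lag Ω G ψ i = Ω ∩ ⋂ k, A k := by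
    ext x
    simp only [Lag, mem_inter_iff, mem_iInter, mem_ofPred_eq]
    refine and_congr_right fun hx => forall_congr' fun k => ?_
    have := Set.ext_iff.1 (hAΩ k) x
    simpa [hx] using this
  rw [hLag]
  exact hΩ.measurableSet.inter (.iInter fun k => (hA k).measurableSet)

theorem eventually_mem_Lag_inter_Lag_iff (hΩ : IsOpen Ω)
    (hG : ∀ k, ContinuousOn (fun q : EuclideanSpace ℝ (Fin d) × ℝ => G q.1 k q.2) (Ω ×ˢ univ))
    (hx : x ∈ Ω) (hij : G x j (ψ j) = G x i (ψ i))
    (hne : ∀ k, k ≠ i → k ≠ j → G x k (ψ k) ≠ G x i (ψ i)) :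
    ∀ᶠ q in 𝓝[{q : (Fin N → ℝ) × _ | G q.2 j (q.1 j) = G q.2 i (q.1 i)}] (ψ, x),
      q.2 ∈ Lag Ω G q.1 i ∩ Lag Ω G q.1 j ↔ x ∈ Lag Ω G ψ i ∩ Lag Ω G ψ j := by
  have hΩ' : ∀ᶠ q : (Fin N → ℝ) × EuclideanSpace ℝ (Fin d) in 𝓝 (ψ, x), q.2 ∈ Ω :=
    continuousAt_snd.preimage_mem_nhds (hΩ.mem_nhds hx)
  filter_upwards [eventually_forall_le_iff_of_forall_ne (i := i) (j := j)
    (u := fun k (q : (Fin N → ℝ) × EuclideanSpace ℝ (Fin d)) => G q.2 k (q.1 k))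
    (fun k => continuousAt_eval_potential hΩ (hG k) hx) hne hij,
    nhdsWithin_le_nhds hΩ', self_mem_nhdsWithin] with q hq hqΩ hqij
  rw [mem_Lag_inter_Lag_iff, mem_Lag_inter_Lag_iff]
  exact and_congr (and_congr (iff_of_true hqΩ hx) hq) (iff_of_true hqij hij)

theorem continuousWithinAt_indicator_Lag_inter_Lag (hΩ : IsOpen Ω)
    (hG : ∀ k, ContinuousOn (fun q : EuclideanSpace ℝ (Fin d) × ℝ => G q.1 k q.2) (Ω ×ˢ univ))
    (hx : x ∈ Ω) (hij : G x j (ψ j) = G x i (ψ i))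
    (hne : ∀ k, k ≠ i → k ≠ j → G x k (ψ k) ≠ G x i (ψ i))
    {κ : (Fin N → ℝ) → EuclideanSpace ℝ (Fin d) → ℝ≥0}
    (hκ : ContinuousAt (uncurry κ) (ψ, x)) :
    ContinuousWithinAt (uncurry fun ψ => (Lag Ω G ψ i ∩ Lag Ω G ψ j).indicator (κ ψ))
      {q | G q.2 j (q.1 j) = G q.2 i (q.1 i)} (ψ, x) := by
  have hiff := eventually_mem_Lag_inter_Lag_iff hΩ hG hx hij hne
  by_cases hmem : x ∈ Lag Ω G ψ i ∩ Lag Ω G ψ j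
  · refine hκ.continuousWithinAt.congr_of_eventuallyEq ?_ (indicator_of_mem hmem _)
    filter_upwards [hiff] with q hq using indicator_of_mem (hq.2 hmem) _
  · refine (continuousWithinAt_const (b := 0)).congr_of_eventuallyEq ?_
      (indicator_of_notMem hmem _)
    filter_upwards [hiff] with q hq using indicator_of_notMem (mt hq.1 hmem) _

theorem ae_forall_ne_of_hausdorffMeasure_Gam_inter_Gam_eq_zero {m : ℝ}
    (hGen : ∀ k, i ≠ k → j ≠ k → μH[m] (Gam Ω G ψ i j ∩ Gam Ω G ψ i k) = 0) :
    ∀ᵐ x ∂(μH[m] : Measure (EuclideanSpace ℝ (Fin d))), x ∈ Ω → G x j (ψ j) = G x i (ψ i) →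
      ∀ k, k ≠ i → k ≠ j → G x k (ψ k) ≠ G x i (ψ i) := by
  have hnotMem : ∀ᵐ x ∂(μH[m] : Measure (EuclideanSpace ℝ (Fin d))), ∀ k, i ≠ k → j ≠ k →
      x ∉ Gam Ω G ψ i j ∩ Gam Ω G ψ i k := by
    simp only [ae_all_iff]
    exact fun k hik hjk => measure_eq_zero_iff_ae_notMem.1 (hGen k hik hjk)
  filter_upwards [hnotMem] with x hx hxΩ hxij k hki hkj hxk
  exact hx k hki.symm hkj.symm ⟨⟨hxΩ, hxij.symm⟩, hxΩ, hxk.symm⟩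

theorem ae_continuousWithinAt_indicator_Lag_inter_Lag (hΩ : IsOpen Ω)
    (hG : ∀ k, ContinuousOn (fun q : EuclideanSpace ℝ (Fin d) × ℝ => G q.1 k q.2) (Ω ×ˢ univ))
    {m : ℝ} (hGen : ∀ k, i ≠ k → j ≠ k → μH[m] (Gam Ω G ψ i j ∩ Gam Ω G ψ i k) = 0)
    {κ : (Fin N → ℝ) → EuclideanSpace ℝ (Fin d) → ℝ≥0}
    (hκ : ∀ x ∈ Ω, G x j (ψ j) = G x i (ψ i) → ContinuousAt (uncurry κ) (ψ, x)) :
    ∀ᵐ x ∂(μH[m] : Measure (EuclideanSpace ℝ (Fin d))), x ∈ Ω → G x j (ψ j) = G x i (ψ i) →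
      ContinuousWithinAt (uncurry fun ψ => (Lag Ω G ψ i ∩ Lag Ω G ψ j).indicator (κ ψ))
        {q | G q.2 j (q.1 j) = G q.2 i (q.1 i)} (ψ, x) := by
  filter_upwards [ae_forall_ne_of_hausdorffMeasure_Gam_inter_Gam_eq_zero hGen] with x hx hxΩ hij
  exact continuousWithinAt_indicator_Lag_inter_Lag hΩ hG hxΩ hij (hx hxΩ hij) (hκ x hxΩ hij)

theorem measurable_indicator_Lag_inter_Lag (hΩ : IsOpen Ω)
    (hG : ∀ k, ContinuousOn (fun q : EuclideanSpace ℝ (Fin d) × ℝ => G q.1 k q.2) (Ω ×ˢ univ))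
    {g : EuclideanSpace ℝ (Fin d) → ℝ≥0}
    (hg : ∀ x ∈ Ω, G x j (ψ j) = G x i (ψ i) → ContinuousAt g x) :
    Measurable ((Lag Ω G ψ i ∩ Lag Ω G ψ j).indicator g) := by
  classical
  rw [← piecewise_eq_indicator]
  refine ContinuousOn.measurable_piecewise (fun x hx => ?_) continuousOn_const
    ((measurableSet_Lag hΩ hG).inter (measurableSet_Lag hΩ hG))
  exact (hg x hx.1.1 (mem_Lag_inter_Lag_iff.1 hx).2).continuousWithinAt

theorem continuousAtUpTo_lintegral_Lag_inter_Lag (hΩ : IsOpen Ω)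
    {Gx : EuclideanSpace ℝ (Fin d) → Fin N → ℝ → EuclideanSpace ℝ (Fin d)}
    (hGx : ∀ x ∈ Ω, ∀ i v, HasGradientAt (fun x' => G x' i v) (Gx x i v) x)
    (hG : ∀ k, ContinuousOn (fun q : EuclideanSpace ℝ (Fin d) × ℝ => G q.1 k q.2) (Ω ×ˢ univ))
    (hGxc : ∀ k, ContinuousOn (fun q : EuclideanSpace ℝ (Fin d) × ℝ => Gx q.1 k q.2) (Ω ×ˢ univ))
    (hGx_ne : ∀ x ∈ Ω, G x j (ψ j) = G x i (ψ i) → Gx x j (ψ j) ≠ Gx x i (ψ i))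
    (hGen : ∀ k, i ≠ k → j ≠ k → μH[(d : ℝ) - 1] (Gam Ω G ψ i j ∩ Gam Ω G ψ i k) = 0)
    {X : Set (EuclideanSpace ℝ (Fin d))} (hX : IsCompact X) (hXΩ : X ⊆ Ω)
    {κ : (Fin N → ℝ) → EuclideanSpace ℝ (Fin d) → ℝ≥0} (hκX : ∀ ψ, support (κ ψ) ⊆ X)
    (hκ : ∀ ψ, ∀ x ∈ Ω, G x j (ψ j) = G x i (ψ i) → ContinuousAt (uncurry κ) (ψ, x))
    {K : ℝ≥0} (hK : 1 < K) :
    ContinuousAtUpTo ((K : ℝ≥0∞) ^ ((d : ℝ) - 1))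
      (fun ψ => ∫⁻ x in Lag Ω G ψ i ∩ Lag Ω G ψ j, κ ψ x ∂μH[(d : ℝ) - 1]) ψ := by
  have hmeas : ∀ ψ, MeasurableSet (Lag Ω G ψ i ∩ Lag Ω G ψ j) := fun ψ =>
    (measurableSet_Lag hΩ hG).inter (measurableSet_Lag hΩ hG)
  let f : (Fin N → ℝ) → EuclideanSpace ℝ (Fin d) → ℝ := fun ψ x => G x j (ψ j) - G x i (ψ i)
  let f' : (Fin N → ℝ) → EuclideanSpace ℝ (Fin d) → EuclideanSpace ℝ (Fin d) →L[ℝ] ℝ :=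
    fun ψ x => InnerProductSpace.toDual ℝ _ (Gx x j (ψ j) - Gx x i (ψ i))
  let h : (Fin N → ℝ) → EuclideanSpace ℝ (Fin d) → ℝ≥0 :=
    fun ψ => (Lag Ω G ψ i ∩ Lag Ω G ψ j).indicator (κ ψ)
  have hf : ∀ ψ, ∀ x ∈ Ω, HasFDerivAt (f ψ) (f' ψ x) x := fun ψ x hx => by
    rw [show f' ψ x = _ - _ from map_sub _ _ _]
    exact (hGx x hx j (ψ j)).hasFDerivAt.sub (hGx x hx i (ψ i)).hasFDerivAt
  have hfc : ∀ x ∈ Ω, ContinuousAt (uncurry f) (ψ, x) := fun x hx =>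
    (continuousAt_eval_potential hΩ (hG j) hx).sub (continuousAt_eval_potential hΩ (hG i) hx)
  have hf'c : ∀ x ∈ Ω, ContinuousAt (uncurry f') (ψ, x) := fun x hx =>
    (InnerProductSpace.toDual ℝ _).continuous.continuousAt.comp <|
      (continuousAt_eval_potential hΩ (hGxc j) hx).sub
        (continuousAt_eval_potential hΩ (hGxc i) hx)
  have hf'_ne : ∀ x ∈ Ω, f ψ x = 0 → f' ψ x ≠ 0 := fun x hx hfx => by
    simpa [f', sub_eq_zero] using hGx_ne x hx (sub_eq_zero.1 hfx)
  have hh : ∀ ψ, Measurable (h ψ) := fun ψ =>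
    measurable_indicator_Lag_inter_Lag hΩ hG fun x hx hij =>
      (hκ ψ x hx hij).comp (f := fun x => (ψ, x)) (by fun_prop)
  have hsupp : ∀ ψ, support (h ψ) ⊆ X ∩ f ψ ⁻¹' {0} := fun ψ x hx =>
    (support_indicator_Lag_inter_Lag_subset (κ ψ) hx).imp (@hκX ψ x) sub_eq_zero.2
  have hbdd : ∀ x ∈ X, f ψ x = 0 → IsBoundedUnder (· ≤ ·) (𝓝 (ψ, x)) (uncurry h) :=
    fun x hx hfx => (hκ ψ x (hXΩ hx) (sub_eq_zero.1 hfx)).isBoundedUnder_le.mono_le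
      (.of_forall fun q => indicator_apply_le fun _ => le_rfl)
  have hlim : ∀ᵐ x ∂(μH[(d : ℝ) - 1] : Measure (EuclideanSpace ℝ (Fin d))), x ∈ Ω → f ψ x = 0 →
      ContinuousWithinAt (uncurry h) (uncurry f ⁻¹' {0}) (ψ, x) := by
    rw [show uncurry f ⁻¹' {0} = {q | G q.2 j (q.1 j) = G q.2 i (q.1 i)} from
      Set.ext fun q => sub_eq_zero]
    filter_upwards [ae_continuousWithinAt_indicator_Lag_inter_Lag hΩ hG hGen (hκ ψ)]
      with x hx hxΩ hfx using hx hxΩ (sub_eq_zero.1 hfx)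
  simp_rw [← lintegral_indicator (hmeas _), ← ENNReal.coe_indicator]
  simpa only [finrank_euclideanSpace_fin] using continuousAtUpTo_lintegral_of_levelSet
    hΩ hX hXΩ hf hfc hf'c hf'_ne hh hsupp hbdd
    (by simpa only [finrank_euclideanSpace_fin] using hlim) hK

theorem continuous_integral_Lag_inter_Lag (hΩ : IsOpen Ω)
    {Gx : EuclideanSpace ℝ (Fin d) → Fin N → ℝ → EuclideanSpace ℝ (Fin d)}
    (hGx : ∀ x ∈ Ω, ∀ i v, HasGradientAt (fun x' => G x' i v) (Gx x i v) x)
    (hG : ∀ k, ContinuousOn (fun q : EuclideanSpace ℝ (Fin d) × ℝ => G q.1 k q.2) (Ω ×ˢ univ))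
    (hGxc : ∀ k, ContinuousOn (fun q : EuclideanSpace ℝ (Fin d) × ℝ => Gx q.1 k q.2) (Ω ×ˢ univ))
    (hGx_ne : ∀ (ψ : Fin N → ℝ), ∀ x ∈ Ω, G x j (ψ j) = G x i (ψ i) →
      Gx x j (ψ j) ≠ Gx x i (ψ i))
    (hGen : ∀ ψ k, i ≠ k → j ≠ k → μH[(d : ℝ) - 1] (Gam Ω G ψ i j ∩ Gam Ω G ψ i k) = 0)
    {X : Set (EuclideanSpace ℝ (Fin d))} (hX : IsCompact X) (hXΩ : X ⊆ Ω)
    {κ : (Fin N → ℝ) → EuclideanSpace ℝ (Fin d) → ℝ} (hκ₀ : ∀ ψ x, 0 ≤ κ ψ x)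
    (hκX : ∀ ψ, support (κ ψ) ⊆ X)
    (hκ : ∀ ψ, ∀ x ∈ Ω, G x j (ψ j) = G x i (ψ i) → ContinuousAt (uncurry κ) (ψ, x)) :
    Continuous fun ψ => ∫ x in Lag Ω G ψ i ∩ Lag Ω G ψ j, κ ψ x ∂μH[(d : ℝ) - 1] := by
  have hintegral : ∀ ψ, ∫ x in Lag Ω G ψ i ∩ Lag Ω G ψ j, κ ψ x ∂μH[(d : ℝ) - 1] =
      (∫⁻ x in Lag Ω G ψ i ∩ Lag Ω G ψ j, (κ ψ x).toNNReal ∂μH[(d : ℝ) - 1]).toReal := fun ψ => by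
    refine integral_eq_lintegral_of_nonneg_ae (.of_forall (hκ₀ ψ)) <|
      ContinuousOn.aestronglyMeasurable (fun x hx => ?_)
        ((measurableSet_Lag hΩ hG).inter (measurableSet_Lag hΩ hG))
    exact ((hκ ψ x hx.1.1 (mem_Lag_inter_Lag_iff.1 hx).2).comp (f := fun x => (ψ, x))
      (by fun_prop)).continuousWithinAt
  simp_rw [hintegral]
  exact continuous_iff_continuousAt.2 fun ψ =>
    continuousAt_toReal_of_forall_continuousAtUpTo fun K hK =>
      continuousAtUpTo_lintegral_Lag_inter_Lag (κ := fun ψ x => (κ ψ x).toNNReal) hΩ hGx hG hGxc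
        (hGx_ne ψ) (hGen ψ) hX hXΩ
        (fun ψ x hx => hκX ψ fun hκx => hx (by simp [hκx]))
        (fun ψ x hx hij => continuous_real_toNNReal.continuousAt.comp (hκ ψ x hx hij)) hK

end Laguerre

theorem Hij_continuous_general
    {Ω : Set (EuclideanSpace ℝ (Fin d))} (hΩo : IsOpen Ω)
    (G : EuclideanSpace ℝ (Fin d) → Fin N → ℝ → ℝ)
    (Gx : EuclideanSpace ℝ (Fin d) → Fin N → ℝ → EuclideanSpace ℝ (Fin d))
    (Gv : EuclideanSpace ℝ (Fin d) → Fin N → ℝ → ℝ)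
    (hGx : ∀ x ∈ Ω, ∀ (i : Fin N) (v : ℝ), HasGradientAt (fun x' => G x' i v) (Gx x i v) x)
    (hGv : ∀ x ∈ Ω, ∀ (i : Fin N) (v : ℝ), HasDerivAt (fun v' => G x i v') (Gv x i v) v)
    (hGxc : ∀ i : Fin N,
      ContinuousOn (fun q : EuclideanSpace ℝ (Fin d) × ℝ => Gx q.1 i q.2) (Ω ×ˢ univ))
    (hGvc : ∀ i : Fin N,
      ContinuousOn (fun q : EuclideanSpace ℝ (Fin d) × ℝ => Gv q.1 i q.2) (Ω ×ˢ univ))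
    (hTwist : ∀ x ∈ Ω, Injective fun q : Fin N × ℝ => (G x q.1 q.2, Gx x q.1 q.2))
    (ρ : EuclideanSpace ℝ (Fin d) → ℝ) (hρc : Continuous ρ) (hρ0 : ∀ x, 0 ≤ ρ x)
    (hρK : HasCompactSupport ρ) (hρΩ : tsupport ρ ⊆ Ω)
    (hGenΩ : ∀ (ψ : Fin N → ℝ) (i j k : Fin N), i ≠ j → i ≠ k → j ≠ k →
      μH[(d : ℝ) - 1] (Gam Ω G ψ i j ∩ Gam Ω G ψ i k) = 0) :
    ∀ i j : Fin N, i ≠ j →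
      Continuous fun ψ : Fin N → ℝ =>
        ∫ x in Lag Ω G ψ i ∩ Lag Ω G ψ j,
          ρ x * |Gv x i (ψ i)| / ‖Gx x j (ψ j) - Gx x i (ψ i)‖ ∂μH[(d : ℝ) - 1] := by
  intro i j hij
  have hG : ∀ k, ContinuousOn (fun q : EuclideanSpace ℝ (Fin d) × ℝ => G q.1 k q.2) (Ω ×ˢ univ) :=
    fun k => continuousOn_uncurry_of_continuousOn_partial hΩo (g := fun x => G x k)
      (fun x hx => hGx x hx k) (fun x hx => hGv x hx k) (hGxc k) (hGvc k)
  have hGx_ne : ∀ ψ : Fin N → ℝ, ∀ x ∈ Ω, G x j (ψ j) = G x i (ψ i) → Gx x j (ψ j) ≠ Gx x i (ψ i) :=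
    fun ψ x hx hGij hGxij => hij
      (congrArg Prod.fst (hTwist x hx (a₁ := (i, ψ i)) (a₂ := (j, ψ j))
        (Prod.ext hGij.symm hGxij.symm)))
  refine continuous_integral_Lag_inter_Lag hΩo hGx hG hGxc hGx_ne
    (fun ψ k => hGenΩ ψ i j k hij) hρK hρΩ (fun ψ x => ?_) (fun ψ x hx => ?_)
    fun ψ x hx hGij => ?_
  · have := hρ0 x
    positivity
  · exact subset_tsupport ρ fun hρx => hx (by simp [hρx])
  · exact ((hρc.continuousAt.comp continuousAt_snd).mul
      (continuousAt_eval_potential hΩo (hGvc i) hx).abs).div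
      ((continuousAt_eval_potential hΩo (hGxc j) hx).sub
        (continuousAt_eval_potential hΩo (hGxc i) hx)).norm
      (norm_ne_zero_iff.2 (sub_ne_zero.2 (hGx_ne ψ x hx hGij)))

/-- Proposition 3.3: the interface integrals `Hᵢⱼ` are continuous functions of `ψ`. -/
theorem Hij_continuous
    (hd : 1 ≤ d) (hN : 1 ≤ N)
    {Ω : Set (EuclideanSpace ℝ (Fin d))} (hΩo : IsOpen Ω) (hΩb : Bornology.IsBounded Ω)
    (y : Fin N → EuclideanSpace ℝ (Fin d)) (hy : Function.Injective y)
    (G : EuclideanSpace ℝ (Fin d) → Fin N → ℝ → ℝ)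
    (Gx : EuclideanSpace ℝ (Fin d) → Fin N → ℝ → EuclideanSpace ℝ (Fin d))
    (Gv : EuclideanSpace ℝ (Fin d) → Fin N → ℝ → ℝ)
    (hGx : ∀ x ∈ Ω, ∀ (i : Fin N) (v : ℝ), HasGradientAt (fun x' => G x' i v) (Gx x i v) x)
    (hGv : ∀ x ∈ Ω, ∀ (i : Fin N) (v : ℝ), HasDerivAt (fun v' => G x i v') (Gv x i v) v)
    (hGxc : ∀ i : Fin N, ContinuousOn (fun q : EuclideanSpace ℝ (Fin d) × ℝ => Gx q.1 i q.2) (Ω ×ˢ Set.univ))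
    (hGvc : ∀ i : Fin N, ContinuousOn (fun q : EuclideanSpace ℝ (Fin d) × ℝ => Gv q.1 i q.2) (Ω ×ˢ Set.univ))
    (hG2 : ∀ i : Fin N, ContDiffOn ℝ 2 (fun q : EuclideanSpace ℝ (Fin d) × ℝ => G q.1 i q.2) (Ω ×ˢ Set.univ))
    (hReg : ∀ α β : ℝ, α < β → ∃ C : ℝ, ∀ x ∈ Ω, ∀ i : Fin N, ∀ v ∈ Set.Icc α β, ‖Gx x i v‖ ≤ C)
    (hMono : ∀ x ∈ Ω, ∀ (i : Fin N) (v : ℝ), Gv x i v < 0)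
    (hTwist : ∀ x ∈ Ω, Function.Injective fun q : Fin N × ℝ => (G x q.1 q.2, Gx x q.1 q.2))
    {X : Set (EuclideanSpace ℝ (Fin d))} (hXc : IsCompact X) (hXΩ : X ⊆ Ω)
    (ρ : EuclideanSpace ℝ (Fin d) → ℝ) (hρc : Continuous ρ) (hρ0 : ∀ x, 0 ≤ ρ x)
    (hρsupp : tsupport ρ ⊆ X) (hρ1 : (∫ x, ρ x) = 1)
    (hGenΩ : ∀ (ψ : Fin N → ℝ) (i j k : Fin N), i ≠ j → i ≠ k → j ≠ k →
      μH[(d : ℝ) - 1] (Gam Ω G ψ i j ∩ Gam Ω G ψ i k) = 0)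
    (hGenX : ∀ (ψ : Fin N → ℝ) (i j : Fin N), i ≠ j →
      μH[(d : ℝ) - 1] (Gam Ω G ψ i j ∩ frontier X) = 0)
 :
    ∀ i j : Fin N, i ≠ j →
      Continuous fun ψ : Fin N → ℝ =>
        ∫ x in Lag Ω G ψ i ∩ Lag Ω G ψ j,
          ρ x * |Gv x i (ψ i)| / ‖Gx x j (ψ j) - Gx x i (ψ i)‖ ∂μH[(d : ℝ) - 1] := by
  exact Hij_continuous_general hΩo G Gx Gv hGx hGv hGxc hGvc hTwist ρ hρc hρ0
    (hXc.of_isClosed_subset (isClosed_tsupport ρ) hρsupp) (hρsupp.trans hXΩ) hGenΩ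
end
end

section
/- Let G ∈ C²(Ω × Y × ℝ) satisfy (Mono) and (Twist), fix ψ ∈ ℝ^N and two distinct indices i ≠ j, and set f(x,t) = G(x,y_j,ψ_j) − G(x,yᵢ,ψᵢ + t). Let V = {x ∈ Ω : ∃ t ∈ ℝ, f(x,t) = 0}. Then: (1) for each x ∈ Ω, the equation f(x,t) = 0 has at most one solution t ∈ ℝ; (2) V is open and the map u : V → ℝ defined by f(x, u(x)) = 0 is of class C¹; (3) for all x ∈ V, ∇u(x) = (∇ₓG(x,y_j,ψ_j) − ∇ₓG(x,yᵢ,ψᵢ + u(x))) / ∂ᵥG(x,yᵢ,ψᵢ + u(x)); and (4) ∇u(x) ≠ 0 for all x ∈ V. -/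
set_option autoImplicit false

open MeasureTheory Set

noncomputable section

variable {d N : ℕ}

/-!
Where `∂ₜf` does not vanish, Rolle's theorem makes the solution `t` of `f(x, t) = c` unique, so any
function solving the equation agrees near each point with the one provided by the implicit function
theorem and inherits its regularity and its gradient `-∇ₓf / ∂ₜf`. For
`f(x, t) = G(x, yⱼ, ψⱼ) - G(x, yᵢ, ψᵢ + t)`, the values of `G` at `(yⱼ, ψⱼ)` and `(yᵢ, ψᵢ + u(x))`
coincide at a solution, so the twist condition forces the `x`-gradients there to differ.
-/

open scoped Topology ContDiff

section PartialDerivatives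

variable {𝕜 : Type*} [NontriviallyNormedField 𝕜]
  {E : Type*} [NormedAddCommGroup E] [NormedSpace 𝕜 E]
  {F : Type*} [NormedAddCommGroup F] [NormedSpace 𝕜 F]
  {H : Type*} [NormedAddCommGroup H] [NormedSpace 𝕜 H]
  {f : E × F → H} {f' : E × F →L[𝕜] H} {x : E} {y : F}

lemma comp_inl_eq_of_hasFDerivAt_left {fx : E →L[𝕜] H} (hf : HasFDerivAt f f' (x, y))
    (hfx : HasFDerivAt (fun z ↦ f (z, y)) fx x) : f' ∘L .inl 𝕜 E F = fx :=
  (hf.comp x (hasFDerivAt_prodMk_left x y)).unique hfx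

lemma comp_inr_eq_of_hasFDerivAt_right {fy : F →L[𝕜] H} (hf : HasFDerivAt f f' (x, y))
    (hfy : HasFDerivAt (fun s ↦ f (x, s)) fy y) : f' ∘L .inr 𝕜 E F = fy :=
  (hf.comp y (hasFDerivAt_prodMk_right x y)).unique hfy

end PartialDerivatives

section ImplicitFunction

variable {𝕜 : Type*} [RCLike 𝕜]
  {E : Type*} [NormedAddCommGroup E] [NormedSpace 𝕜 E] [CompleteSpace E]
  {F : Type*} [NormedAddCommGroup F] [NormedSpace 𝕜 F] [CompleteSpace F]
  {H : Type*} [NormedAddCommGroup H] [NormedSpace 𝕜 H] [CompleteSpace H]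
  {f : E × F → H} {f' : E × F →L[𝕜] H} {fx : E →L[𝕜] H} {fy : F ≃L[𝕜] H} {x : E} {y : F}

lemma eventually_exists_apply_eq_of_hasStrictFDerivAt (hf : HasStrictFDerivAt f f' (x, y))
    (hfy : HasFDerivAt (fun s ↦ f (x, s)) (fy : F →L[𝕜] H) y) :
    ∀ᶠ z in 𝓝 x, ∃ s, f (z, s) = f (x, y) :=
  have hinv : (f' ∘L .inr 𝕜 E F).IsInvertible :=
    ⟨fy, (comp_inr_eq_of_hasFDerivAt_right hf.hasFDerivAt hfy).symm⟩
  (hf.eventually_apply_implicitFunctionOfProdDomain hinv).mono fun _ hz ↦ ⟨_, hz⟩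

variable {u : E → F}

lemma eventuallyEq_implicitFunctionOfProdDomain (hf : HasStrictFDerivAt f f' (x, u x))
    (hinv : (f' ∘L .inr 𝕜 E F).IsInvertible)
    (hu : ∀ᶠ z in 𝓝 x, ∀ s, f (z, s) = f (x, u x) → s = u z) :
    u =ᶠ[𝓝 x] hf.implicitFunctionOfProdDomain hinv := by
  filter_upwards [hu, hf.eventually_apply_implicitFunctionOfProdDomain hinv] with z huniq hz
  exact (huniq _ hz).symm

lemma hasFDerivAt_of_eventually_unique_solution (hf : HasStrictFDerivAt f f' (x, u x))
    (hfx : HasFDerivAt (fun z ↦ f (z, u x)) fx x)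
    (hfy : HasFDerivAt (fun s ↦ f (x, s)) (fy : F →L[𝕜] H) (u x))
    (hu : ∀ᶠ z in 𝓝 x, ∀ s, f (z, s) = f (x, u x) → s = u z) :
    HasFDerivAt u (-((fy.symm : H →L[𝕜] F) ∘L fx)) x := by
  have hinl : f' ∘L .inl 𝕜 E F = fx := comp_inl_eq_of_hasFDerivAt_left hf.hasFDerivAt hfx
  have hinr : f' ∘L .inr 𝕜 E F = fy := comp_inr_eq_of_hasFDerivAt_right hf.hasFDerivAt hfy
  have hinv : (f' ∘L .inr 𝕜 E F).IsInvertible := ⟨fy, hinr.symm⟩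
  have hderiv := (hf.hasStrictFDerivAt_implicitFunctionOfProdDomain hinv).hasFDerivAt
  rw [hinl, hinr, ContinuousLinearMap.inverse_equiv] at hderiv
  exact hderiv.congr_of_eventuallyEq (eventuallyEq_implicitFunctionOfProdDomain hf hinv hu)

lemma contDiffAt_of_eventually_unique_solution {n : ℕ∞ω} (hn : n ≠ 0)
    (hf : ContDiffAt 𝕜 n f (x, u x))
    (hfy : HasFDerivAt (fun s ↦ f (x, s)) (fy : F →L[𝕜] H) (u x))
    (hu : ∀ᶠ z in 𝓝 x, ∀ s, f (z, s) = f (x, u x) → s = u z) :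
    ContDiffAt 𝕜 n u x := by
  have hstrict := hf.hasStrictFDerivAt hn
  have hinv : (fderiv 𝕜 f (x, u x) ∘L .inr 𝕜 E F).IsInvertible :=
    ⟨fy, (comp_inr_eq_of_hasFDerivAt_right hstrict.hasFDerivAt hfy).symm⟩
  exact (hf.contDiffAt_implicitFunction hn hinv).congr_of_eventuallyEq
    (eventuallyEq_implicitFunctionOfProdDomain hstrict hinv hu)

end ImplicitFunction

section ScalarEquation

lemma injective_of_hasDerivAt_ne_zero {g g' : ℝ → ℝ} (hg : ∀ t, HasDerivAt g (g' t) t)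
    (hg' : ∀ t, g' t ≠ 0) : Function.Injective g := by
  have hcont : Continuous g := continuous_iff_continuousAt.2 fun t ↦ (hg t).continuousAt
  refine .of_lt_imp_ne fun a b hab heq ↦ ?_
  obtain ⟨c, -, hc⟩ := exists_hasDerivAt_eq_zero hab hcont.continuousOn heq fun t _ ↦ hg t
  exact hg' c hc

lemma hasFDerivAt_unitsEquivAut_of_hasDerivAt {𝕜 : Type*} [NontriviallyNormedField 𝕜]
    {g : 𝕜 → 𝕜} {g' t : 𝕜} (hg : HasDerivAt g g' t) (hg' : g' ≠ 0) :
    HasFDerivAt g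
      (ContinuousLinearEquiv.unitsEquivAut 𝕜 (Units.mk0 g' hg') : 𝕜 →L[𝕜] 𝕜) t := by
  refine hg.hasFDerivAt.congr_fderiv ?_
  ext
  simp

lemma isOpen_setOf_mem_and_exists_apply_eq {𝕜 : Type*} [RCLike 𝕜]
    {E : Type*} [NormedAddCommGroup E] [NormedSpace 𝕜 E] [CompleteSpace E]
    {f : E × 𝕜 → 𝕜} {ft : E → 𝕜 → 𝕜} {Ω : Set E} {n : ℕ∞ω} (hΩ : IsOpen Ω) (hn : n ≠ 0)
    (hf : ∀ x ∈ Ω, ∀ t, ContDiffAt 𝕜 n f (x, t))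
    (hft : ∀ x ∈ Ω, ∀ t, HasDerivAt (fun s ↦ f (x, s)) (ft x t) t)
    (hft₀ : ∀ x ∈ Ω, ∀ t, ft x t ≠ 0) (c : 𝕜) :
    IsOpen {x ∈ Ω | ∃ t, f (x, t) = c} := by
  refine isOpen_iff_mem_nhds.2 ?_
  rintro x ⟨hx, t, rfl⟩
  have hsolvable : ∀ᶠ z in 𝓝 x, ∃ s, f (z, s) = f (x, t) :=
    eventually_exists_apply_eq_of_hasStrictFDerivAt ((hf x hx t).hasStrictFDerivAt hn)
      (hasFDerivAt_unitsEquivAut_of_hasDerivAt (hft x hx t) (hft₀ x hx t))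
  exact (hΩ.eventually_mem hx).and hsolvable

variable {E : Type*} [NormedAddCommGroup E] [InnerProductSpace ℝ E] [CompleteSpace E]

lemma hasGradientAt_of_eventually_unique_solution {f : E × ℝ → ℝ} {f' : E × ℝ →L[ℝ] ℝ}
    {fx x : E} {ft : ℝ} {u : E → ℝ} (hf : HasStrictFDerivAt f f' (x, u x))
    (hfx : HasGradientAt (fun z ↦ f (z, u x)) fx x)
    (hft : HasDerivAt (fun s ↦ f (x, s)) ft (u x)) (hft₀ : ft ≠ 0)
    (hu : ∀ᶠ z in 𝓝 x, ∀ s, f (z, s) = f (x, u x) → s = u z) :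
    HasGradientAt u (-(ft⁻¹ • fx)) x := by
  have hderiv := hasFDerivAt_of_eventually_unique_solution hf hfx.hasFDerivAt
    (hasFDerivAt_unitsEquivAut_of_hasDerivAt hft hft₀) hu
  refine hasGradientAt_iff_hasFDerivAt.2 (hderiv.congr_fderiv ?_)
  ext v
  simp [mul_comm]

theorem exists_hasGradientAt_implicit_solution {f : E × ℝ → ℝ} {fx : E → ℝ → E}
    {ft : E → ℝ → ℝ} {Ω : Set E} {n : ℕ∞ω} (hΩ : IsOpen Ω) (hn : n ≠ 0)
    (hf : ∀ x ∈ Ω, ∀ t, ContDiffAt ℝ n f (x, t))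
    (hfx : ∀ x ∈ Ω, ∀ t, HasGradientAt (fun z ↦ f (z, t)) (fx x t) x)
    (hft : ∀ x ∈ Ω, ∀ t, HasDerivAt (fun s ↦ f (x, s)) (ft x t) t)
    (hft₀ : ∀ x ∈ Ω, ∀ t, ft x t ≠ 0) (c : ℝ) :
    ∃ u : E → ℝ, (∀ x ∈ {x ∈ Ω | ∃ t, f (x, t) = c}, f (x, u x) = c) ∧
      ContDiffOn ℝ n u {x ∈ Ω | ∃ t, f (x, t) = c} ∧
      ∀ x ∈ {x ∈ Ω | ∃ t, f (x, t) = c}, HasGradientAt u (-((ft x (u x))⁻¹ • fx x (u x))) x := by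
  set V := {x ∈ Ω | ∃ t, f (x, t) = c}
  have hVopen : IsOpen V := isOpen_setOf_mem_and_exists_apply_eq hΩ hn hf hft hft₀ c
  have hsolvable : ∀ x ∈ V, ∃ t, f (x, t) = c := fun x hx ↦ hx.2
  choose! u hu using hsolvable
  have hunique : ∀ x ∈ V, ∀ᶠ z in 𝓝 x, ∀ s, f (z, s) = f (x, u x) → s = u z := by
    intro x hx
    filter_upwards [hVopen.mem_nhds hx] with z hz s hs
    have hinj := injective_of_hasDerivAt_ne_zero (hft z hz.1) (hft₀ z hz.1)
    exact hinj (hs.trans ((hu x hx).trans (hu z hz).symm))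
  refine ⟨u, hu, fun x hx ↦ ContDiffAt.contDiffWithinAt ?_, fun x hx ↦ ?_⟩
  · exact contDiffAt_of_eventually_unique_solution hn (hf x hx.1 (u x))
      (hasFDerivAt_unitsEquivAut_of_hasDerivAt (hft x hx.1 (u x)) (hft₀ x hx.1 (u x)))
      (hunique x hx)
  · exact hasGradientAt_of_eventually_unique_solution ((hf x hx.1 (u x)).hasStrictFDerivAt hn)
      (hfx x hx.1 (u x)) (hft x hx.1 (u x)) (hft₀ x hx.1 (u x)) (hunique x hx)

end ScalarEquation

section Interface

variable {E ι : Type*}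

/-- The function `f(x, t) = G(x, yⱼ, ψⱼ) - G(x, yᵢ, ψᵢ + t)`, whose zeros at height `t` form the
interface `Γᵢⱼ(ψ + t eᵢ)`. The points of `Y` enter only through their indices. -/
def interfaceGap (G : E → ι → ℝ → ℝ) (ψ : ι → ℝ) (i j : ι) (q : E × ℝ) : ℝ :=
  G q.1 j (ψ j) - G q.1 i (ψ i + q.2)

variable {G : E → ι → ℝ → ℝ} {ψ : ι → ℝ} {i j : ι} {x : E} {t : ℝ}

lemma hasDerivAt_interfaceGap {Gv : ℝ} (hGv : HasDerivAt (G x i) Gv (ψ i + t)) :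
    HasDerivAt (fun s ↦ interfaceGap G ψ i j (x, s)) (-Gv) t :=
  (hGv.comp_const_add (ψ i) t).const_sub (G x j (ψ j))

lemma contDiffAt_interfaceGap [NormedAddCommGroup E] [NormedSpace ℝ E] {n : ℕ∞ω}
    (hGj : ContDiffAt ℝ n (fun q : E × ℝ ↦ G q.1 j q.2) (x, ψ j))
    (hGi : ContDiffAt ℝ n (fun q : E × ℝ ↦ G q.1 i q.2) (x, ψ i + t)) :
    ContDiffAt ℝ n (interfaceGap G ψ i j) (x, t) := by
  have hj : ContDiffAt ℝ n (fun q : E × ℝ ↦ G q.1 j (ψ j)) (x, t) :=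
    hGj.comp (f := fun q : E × ℝ ↦ (q.1, ψ j)) (x, t) (by fun_prop)
  have hi : ContDiffAt ℝ n (fun q : E × ℝ ↦ G q.1 i (ψ i + q.2)) (x, t) :=
    hGi.comp (f := fun q : E × ℝ ↦ (q.1, ψ i + q.2)) (x, t) (by fun_prop)
  exact hj.sub hi

variable [NormedAddCommGroup E] [InnerProductSpace ℝ E] [CompleteSpace E]

lemma hasGradientAt_interfaceGap {Gxj Gxi : E}
    (hGj : HasGradientAt (fun z ↦ G z j (ψ j)) Gxj x)
    (hGi : HasGradientAt (fun z ↦ G z i (ψ i + t)) Gxi x) :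
    HasGradientAt (fun z ↦ interfaceGap G ψ i j (z, t)) (Gxj - Gxi) x := by
  rw [hasGradientAt_iff_hasFDerivAt, map_sub]
  exact hGj.hasFDerivAt.sub hGi.hasFDerivAt

theorem implicit_interface_function_general {Ω : Set E} (hΩ : IsOpen Ω)
    {n : ℕ∞ω} (hn : n ≠ 0) (Gx : E → ι → ℝ → E) (Gv : E → ι → ℝ → ℝ)
    (hGx : ∀ x ∈ Ω, ∀ k v, HasGradientAt (fun z ↦ G z k v) (Gx x k v) x)
    (hGv : ∀ x ∈ Ω, ∀ k v, HasDerivAt (G x k) (Gv x k v) v)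
    (hG : ∀ k, ContDiffOn ℝ n (fun q : E × ℝ ↦ G q.1 k q.2) (Ω ×ˢ univ))
    (hGv₀ : ∀ x ∈ Ω, ∀ k v, Gv x k v ≠ 0)
    (hTwist : ∀ x ∈ Ω, Function.Injective fun q : ι × ℝ ↦ (G x q.1 q.2, Gx x q.1 q.2))
    (ψ : ι → ℝ) {i j : ι} (hij : i ≠ j)
    {V : Set E} (hV : V = {x ∈ Ω | ∃ t : ℝ, G x j (ψ j) - G x i (ψ i + t) = 0}) :
    (∀ x ∈ Ω, ∀ t t' : ℝ,
      G x j (ψ j) - G x i (ψ i + t) = 0 → G x j (ψ j) - G x i (ψ i + t') = 0 → t = t') ∧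
    IsOpen V ∧
    ∃ u : E → ℝ,
      (∀ x ∈ V, G x j (ψ j) - G x i (ψ i + u x) = 0) ∧
      ContDiffOn ℝ n u V ∧
      ∀ x ∈ V,
        HasGradientAt u
          ((Gv x i (ψ i + u x))⁻¹ • (Gx x j (ψ j) - Gx x i (ψ i + u x))) x ∧
        (Gv x i (ψ i + u x))⁻¹ • (Gx x j (ψ j) - Gx x i (ψ i + u x)) ≠ 0 := by
  have hgap : ∀ x ∈ Ω, ∀ t, ContDiffAt ℝ n (interfaceGap G ψ i j) (x, t) := by
    have hGat : ∀ x ∈ Ω, ∀ k v, ContDiffAt ℝ n (fun q : E × ℝ ↦ G q.1 k q.2) (x, v) :=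
      fun x hx k v ↦ (hG k).contDiffAt ((hΩ.prod isOpen_univ).mem_nhds ⟨hx, mem_univ v⟩)
    exact fun x hx t ↦ contDiffAt_interfaceGap (hGat x hx j _) (hGat x hx i _)
  have hgap_x : ∀ x ∈ Ω, ∀ t, HasGradientAt (fun z ↦ interfaceGap G ψ i j (z, t))
      (Gx x j (ψ j) - Gx x i (ψ i + t)) x :=
    fun x hx t ↦ hasGradientAt_interfaceGap (hGx x hx j _) (hGx x hx i _)
  have hgap_t : ∀ x ∈ Ω, ∀ t,
      HasDerivAt (fun s ↦ interfaceGap G ψ i j (x, s)) (-Gv x i (ψ i + t)) t :=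
    fun x hx t ↦ hasDerivAt_interfaceGap (hGv x hx i _)
  have hgap_t₀ : ∀ x ∈ Ω, ∀ t, -Gv x i (ψ i + t) ≠ 0 :=
    fun x hx t ↦ neg_ne_zero.2 (hGv₀ x hx i _)
  subst hV
  have hVopen := isOpen_setOf_mem_and_exists_apply_eq hΩ hn hgap hgap_t hgap_t₀ 0
  obtain ⟨u, hu, hu_contDiff, hu_grad⟩ :=
    exists_hasGradientAt_implicit_solution hΩ hn hgap hgap_x hgap_t hgap_t₀ 0
  refine ⟨fun x hx t t' ht ht' ↦ ?_, hVopen, u, hu, hu_contDiff, fun x hx ↦ ⟨?_, ?_⟩⟩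
  · exact injective_of_hasDerivAt_ne_zero (hgap_t x hx) (hgap_t₀ x hx) (ht.trans ht'.symm)
  · simpa only [inv_neg, neg_smul, neg_neg] using hu_grad x hx
  · refine smul_ne_zero (inv_ne_zero (hGv₀ x hx.1 i _)) (sub_ne_zero.2 fun hgrad_eq ↦ hij ?_)
    have heq : (j, ψ j) = (i, ψ i + u x) :=
      hTwist x hx.1 (Prod.ext (sub_eq_zero.1 (hu x hx)) hgrad_eq)
    exact (congrArg Prod.fst heq).symm

end Interface

/-- Step 1 in the proof of Proposition 3.2: the implicit function `u` with level sets
`Γᵢⱼ(ψ + t eᵢ)` is well defined and `C¹` on the open set `V`, with nonvanishing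
explicit gradient. -/
theorem implicit_interface_function
    (hd : 1 ≤ d) (hN : 1 ≤ N)
    {Ω : Set (EuclideanSpace ℝ (Fin d))} (hΩo : IsOpen Ω) (hΩb : Bornology.IsBounded Ω)
    (y : Fin N → EuclideanSpace ℝ (Fin d)) (hy : Function.Injective y)
    (G : EuclideanSpace ℝ (Fin d) → Fin N → ℝ → ℝ)
    (Gx : EuclideanSpace ℝ (Fin d) → Fin N → ℝ → EuclideanSpace ℝ (Fin d))
    (Gv : EuclideanSpace ℝ (Fin d) → Fin N → ℝ → ℝ)
    (hGx : ∀ x ∈ Ω, ∀ (i : Fin N) (v : ℝ), HasGradientAt (fun x' => G x' i v) (Gx x i v) x)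
    (hGv : ∀ x ∈ Ω, ∀ (i : Fin N) (v : ℝ), HasDerivAt (fun v' => G x i v') (Gv x i v) v)
    (hGxc : ∀ i : Fin N, ContinuousOn (fun q : EuclideanSpace ℝ (Fin d) × ℝ => Gx q.1 i q.2) (Ω ×ˢ Set.univ))
    (hGvc : ∀ i : Fin N, ContinuousOn (fun q : EuclideanSpace ℝ (Fin d) × ℝ => Gv q.1 i q.2) (Ω ×ˢ Set.univ))
    (hG2 : ∀ i : Fin N, ContDiffOn ℝ 2 (fun q : EuclideanSpace ℝ (Fin d) × ℝ => G q.1 i q.2) (Ω ×ˢ Set.univ))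
    (hMono : ∀ x ∈ Ω, ∀ (i : Fin N) (v : ℝ), Gv x i v < 0)
    (hTwist : ∀ x ∈ Ω, Function.Injective fun q : Fin N × ℝ => (G x q.1 q.2, Gx x q.1 q.2))
    (ψ : Fin N → ℝ) (i j : Fin N) (hij : i ≠ j)
    (V : Set (EuclideanSpace ℝ (Fin d)))
    (hV : V = {x ∈ Ω | ∃ t : ℝ, G x j (ψ j) - G x i (ψ i + t) = 0}) :
    (∀ x ∈ Ω, ∀ t t' : ℝ,
      G x j (ψ j) - G x i (ψ i + t) = 0 → G x j (ψ j) - G x i (ψ i + t') = 0 → t = t') ∧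
    IsOpen V ∧
    ∃ u : EuclideanSpace ℝ (Fin d) → ℝ,
      (∀ x ∈ V, G x j (ψ j) - G x i (ψ i + u x) = 0) ∧
      ContDiffOn ℝ 1 u V ∧
      ∀ x ∈ V,
        HasGradientAt u
          ((Gv x i (ψ i + u x))⁻¹ • (Gx x j (ψ j) - Gx x i (ψ i + u x))) x ∧
        (Gv x i (ψ i + u x))⁻¹ • (Gx x j (ψ j) - Gx x i (ψ i + u x)) ≠ 0 := by
  exact implicit_interface_function_general hΩo one_ne_zero Gx Gv hGx hGv
    (fun k ↦ (hG2 k).of_le one_le_two) (fun x hx k v ↦ (hMono x hx k v).ne) hTwist ψ hij hV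
end
end

section
/- Let U ⊆ ℝ^d be a path-connected open set and S ⊆ ℝ^d a closed set with ℋ^{d−1}(S) = 0, where ℋ^{d−1} denotes the (d−1)-dimensional Hausdorff measure. Then U \ S is path-connected. -/
set_option autoImplicit false

open MeasureTheory Set

noncomputable section

/-!
Inside a convex open set, two points `x ≠ y` outside `S` are joined by the parabolic arcs
`t ↦ x + t (y - x) + t (1 - t) w`, where `w` ranges over a hyperplane `ker f` with `f (y - x) = 1`.
Distinct arcs meet only at `x` and `y`, so `w` can be recovered from any other point of its arc, and
`w` depends smoothly on that point. The `w` whose arc meets `S` therefore form an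
`ℋ^{d-1}`-null subset of the hyperplane, and arbitrarily small `w` give arcs avoiding `S`.
Since `S` has dense complement, local path-connectedness of `U \ S` propagates along the connected
set `U`.
-/

open Filter Topology Module
open scoped unitInterval

theorem hausdorffMeasure_image_eq_zero_of_locallyLipschitzOn {X Y : Type*}
    [EMetricSpace X] [SecondCountableTopology X] [MeasurableSpace X] [BorelSpace X]
    [EMetricSpace Y] [MeasurableSpace Y] [BorelSpace Y]
    {g : X → Y} {s : Set X} {r : ℝ} (hr : 0 ≤ r) (hg : LocallyLipschitzOn s g)
    (hs : μH[r] s = 0) : μH[r] (g '' s) = 0 := by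
  have hlocal : ∀ a ∈ s, ∃ C, ∃ V ∈ 𝓝[s] a, LipschitzOnWith C g V := fun _ ha ↦ hg ha
  choose! C V hV hlip using hlocal
  obtain ⟨c, hcs, hc, hcover⟩ := TopologicalSpace.countable_cover_nhdsWithin hV
  have hpiece : ∀ a ∈ c, μH[r] (g '' (s ∩ V a)) = 0 := fun a ha ↦ by
    have hle := ((hlip a (hcs ha)).mono inter_subset_right).hausdorffMeasure_image_le
      (s := s ∩ V a) hr
    rwa [measure_mono_null inter_subset_left hs, mul_zero, nonpos_iff_eq_zero] at hle
  refine measure_mono_null ?_ ((measure_biUnion_null_iff hc).2 hpiece)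
  rw [← image_iUnion₂, ← inter_iUnion₂, inter_eq_self_of_subset_left hcover]

theorem isPathConnected_diff_of_locally {X : Type*} [TopologicalSpace X] {U S : Set X}
    (hU : IsConnected U) (hS : Dense Sᶜ)
    (hloc : ∀ a ∈ U, ∃ V ∈ 𝓝 a, V ⊆ U ∧ IsPathConnected (V \ S)) :
    IsPathConnected (U \ S) := by
  let NearbyJoined (a b : X) : Prop :=
    ∃ A ∈ 𝓝 a, ∃ B ∈ 𝓝 b, ∀ x ∈ A \ S, ∀ y ∈ B \ S, JoinedIn (U \ S) x y
  have nearbyJoined : ∀ a ∈ U, ∀ b ∈ U, NearbyJoined a b := fun a ha b hb ↦ by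
    refine hU.isPreconnected.induction₂ NearbyJoined ?near ?trans ?symm ha hb
    case near =>
      intro a ha
      obtain ⟨V, hV, hVU, hVS⟩ := hloc a ha
      filter_upwards [mem_nhdsWithin_of_mem_nhds (eventually_mem_nhds_iff.2 hV)] with b hb
      exact ⟨V, hV, V, hb, fun x hx y hy ↦
        (hVS.joinedIn x hx y hy).mono (sdiff_subset_sdiff_left hVU)⟩
    case trans =>
      rintro a b c - - - ⟨A, hA, B, hB, hAB⟩ ⟨B', hB', C, hC, hBC⟩
      obtain ⟨m, hmS, hmB, hmB'⟩ := hS.inter_nhds_nonempty (inter_mem hB hB')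
      exact ⟨A, hA, C, hC, fun x hx y hy ↦
        (hAB x hx m ⟨hmB, hmS⟩).trans (hBC m ⟨hmB', hmS⟩ y hy)⟩
    case symm =>
      rintro a b - - ⟨A, hA, B, hB, hAB⟩
      exact ⟨B, hB, A, hA, fun x hx y hy ↦ (hAB y hy x hx).symm⟩
  obtain ⟨a, ha⟩ := hU.nonempty
  obtain ⟨V, -, hVU, hVS⟩ := hloc a ha
  refine isPathConnected_iff.2 ⟨hVS.nonempty.mono (sdiff_subset_sdiff_left hVU), fun x hx y hy ↦ ?_⟩
  obtain ⟨A, hA, B, hB, hAB⟩ := nearbyJoined x hx.1 y hy.1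
  exact hAB x ⟨mem_of_mem_nhds hA, hx.2⟩ y ⟨mem_of_mem_nhds hB, hy.2⟩

section ParabolicArc

variable {E : Type*} [NormedAddCommGroup E] [NormedSpace ℝ E]

/-- The parabolic arc from `x` (at time `0`) to `y` (at time `1`) obtained by bending the segment
in the direction `w`. -/
def parabolicArc (x y w : E) (t : ℝ) : E :=
  AffineMap.lineMap x y t + (t * (1 - t)) • w

/-- The bending direction of the parabolic arc from `x` to `y` through the point `p`, when
`f (y - x) = 1` and the direction is sought in `ker f`; the time at which `p` is reached is then
`f (p - x)`. It has the junk value `0` at `f (p - x) = 0` and `f (p - x) = 1`. -/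
def arcDirection (f : E →L[ℝ] ℝ) (x y p : E) : E :=
  (f (p - x) * (1 - f (p - x)))⁻¹ • (p - AffineMap.lineMap x y (f (p - x)))

variable {f : E →L[ℝ] ℝ} {x y w : E} {t : ℝ}

@[simp]
theorem parabolicArc_zero (x y w : E) : parabolicArc x y w 0 = x := by simp [parabolicArc]

@[simp]
theorem parabolicArc_one (x y w : E) : parabolicArc x y w 1 = y := by simp [parabolicArc]

theorem continuous_parabolicArc (x y w : E) : Continuous (parabolicArc x y w) := by
  unfold parabolicArc
  fun_prop

theorem parabolicArc_mem_of_convex {B : Set E} {ε : ℝ} (hB : Convex ℝ B)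
    (hx : Metric.ball x ε ⊆ B) (hy : y ∈ B) (hw : ‖w‖ < ε) (ht : t ∈ I) :
    parabolicArc x y w t ∈ B := by
  have hxw : x + t • w ∈ B := hx <| by
    rw [mem_ball_iff_norm, add_sub_cancel_left, norm_smul, Real.norm_of_nonneg ht.1]
    exact (mul_le_of_le_one_left (norm_nonneg w) ht.2).trans_lt hw
  have hcombo : parabolicArc x y w t = AffineMap.lineMap (x + t • w) y t := by
    simp only [parabolicArc, AffineMap.lineMap_apply_module]
    module
  exact hcombo ▸ hB.lineMap_mem hxw hy ht

theorem apply_parabolicArc_sub (hf : f (y - x) = 1) (hw : f w = 0) (t : ℝ) :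
    f (parabolicArc x y w t - x) = t := by
  rw [map_sub] at hf
  simp only [parabolicArc, AffineMap.lineMap_apply_module', map_sub, map_add, map_smul, hf, hw,
    smul_eq_mul]
  ring

theorem arcDirection_parabolicArc (hf : f (y - x) = 1) (hw : f w = 0) (ht : t ∈ Ioo (0 : ℝ) 1) :
    arcDirection f x y (parabolicArc x y w t) = w := by
  have hne : t * (1 - t) ≠ 0 := (mul_pos ht.1 (sub_pos.2 ht.2)).ne'
  rw [arcDirection, apply_parabolicArc_sub hf hw, parabolicArc, add_sub_cancel_left,
    inv_smul_smul₀ hne]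

theorem locallyLipschitzOn_arcDirection (f : E →L[ℝ] ℝ) (x y : E) :
    LocallyLipschitzOn {p | f (p - x) ∈ Ioo (0 : ℝ) 1} (arcDirection f x y) := by
  have hconvex : Convex ℝ {p | f (p - x) ∈ Ioo (0 : ℝ) 1} := by
    simp only [map_sub, sub_mem_Ioo_iff_left]
    exact (convex_Ioo _ _).linear_preimage f.toLinearMap
  refine ContDiffOn.locallyLipschitzOn hconvex fun p hp ↦ ContDiffAt.contDiffWithinAt ?_
  have hne : f (p - x) * (1 - f (p - x)) ≠ 0 := (mul_pos hp.1 (sub_pos.2 hp.2)).ne'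
  unfold arcDirection
  simp only [AffineMap.lineMap_apply_module']
  exact ContDiffAt.smul (ContDiffAt.inv (by fun_prop) hne) (by fun_prop)

end ParabolicArc

section FiniteDimensional

variable {E : Type*} [NormedAddCommGroup E] [NormedSpace ℝ E] [FiniteDimensional ℝ E]
  [MeasurableSpace E] [BorelSpace E] {S : Set E}

theorem hausdorffMeasure_submodule_inter_pos (K : Submodule ℝ E) {O : Set E} (hO : IsOpen O)
    (hne : (K ∩ O : Set E).Nonempty) : 0 < μH[finrank ℝ K] (K ∩ O : Set E) := by
  have himage : (K ∩ O : Set E) = Subtype.val '' (Subtype.val ⁻¹' O : Set K) :=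
    (Subtype.image_preimage_coe _ _).symm
  rw [himage] at hne ⊢
  rw [isometry_subtype_coe.hausdorffMeasure_image (Or.inl (Nat.cast_nonneg _))]
  exact (hO.preimage continuous_subtype_val).measure_pos _ hne.of_image

theorem dense_compl_of_hausdorffMeasure_eq_zero {r : ℝ} (hr : r ≤ finrank ℝ E)
    (hS : μH[r] S = 0) : Dense Sᶜ := by
  have hnull : μH[finrank ℝ E] S = 0 :=
    nonpos_iff_eq_zero.1 ((Measure.hausdorffMeasure_mono hr S).trans_eq hS)
  exact interior_eq_empty_iff_dense_compl.1 (Measure.interior_eq_empty_of_null hnull)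

theorem exists_parabolicArc_notMem (hS : μH[(finrank ℝ E : ℝ) - 1] S = 0) {x y : E} (hxy : x ≠ y)
    (hx : x ∉ S) (hy : y ∉ S) {ε : ℝ} (hε : 0 < ε) :
    ∃ w, ‖w‖ < ε ∧ ∀ t ∈ I, parabolicArc x y w t ∉ S := by
  obtain ⟨f, hf⟩ := SeparatingDual.exists_eq_one (R := ℝ) (sub_ne_zero.2 hxy.symm)
  let K : Submodule ℝ E := f.toLinearMap.ker
  have hdim : (finrank ℝ E : ℝ) - 1 = finrank ℝ K := by
    have hf0 : f.toLinearMap ≠ 0 := fun h ↦ by simpa [hf] using LinearMap.congr_fun h (y - x)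
    rw [← Module.Dual.finrank_ker_add_one_of_ne_zero hf0, Nat.cast_add_one, add_sub_cancel_right]
  rw [hdim] at hS
  let hitting : Set E := arcDirection f x y '' (S ∩ {p | f (p - x) ∈ Ioo (0 : ℝ) 1})
  have hnull : μH[finrank ℝ K] hitting = 0 :=
    hausdorffMeasure_image_eq_zero_of_locallyLipschitzOn (Nat.cast_nonneg _)
      ((locallyLipschitzOn_arcDirection f x y).mono inter_subset_right)
      (measure_mono_null inter_subset_left hS)
  have hpos : 0 < μH[finrank ℝ K] (K ∩ Metric.ball 0 ε : Set E) :=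
    hausdorffMeasure_submodule_inter_pos K Metric.isOpen_ball
      ⟨0, K.zero_mem, Metric.mem_ball_self hε⟩
  obtain ⟨w, ⟨hwK, hwε⟩, hw⟩ : ((K ∩ Metric.ball 0 ε : Set E) \ hitting).Nonempty :=
    sdiff_nonempty.2 fun hsub ↦ hpos.ne' (measure_mono_null hsub hnull)
  refine ⟨w, mem_ball_zero_iff.1 hwε, fun t ht htS ↦ ?_⟩
  have ht0 : t ≠ 0 := by rintro rfl; exact hx (parabolicArc_zero x y w ▸ htS)
  have ht1 : t ≠ 1 := by rintro rfl; exact hy (parabolicArc_one x y w ▸ htS)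
  have htIoo : t ∈ Ioo (0 : ℝ) 1 := ⟨ht.1.lt_of_ne' ht0, ht.2.lt_of_ne ht1⟩
  refine hw ⟨parabolicArc x y w t, ⟨htS, ?_⟩, arcDirection_parabolicArc hf hwK htIoo⟩
  rwa [mem_ofPred_eq, apply_parabolicArc_sub hf hwK]

theorem isPathConnected_diff_of_convex {B : Set E} (hBo : IsOpen B) (hBc : Convex ℝ B)
    (hBne : B.Nonempty) (hS : μH[(finrank ℝ E : ℝ) - 1] S = 0) : IsPathConnected (B \ S) := by
  have hne : (B \ S).Nonempty :=
    (dense_compl_of_hausdorffMeasure_eq_zero (sub_le_self _ zero_le_one) hS).inter_open_nonempty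
      B hBo hBne
  refine isPathConnected_iff.2 ⟨hne, fun x ⟨hxB, hxS⟩ y ⟨hyB, hyS⟩ ↦ ?_⟩
  obtain rfl | hxy := eq_or_ne x y
  · exact JoinedIn.refl ⟨hxB, hxS⟩
  obtain ⟨ε, hε, hball⟩ := Metric.isOpen_iff.1 hBo x hxB
  obtain ⟨w, hwε, hw⟩ := exists_parabolicArc_notMem hS hxy hxS hyS hε
  refine JoinedIn.ofLine (continuous_parabolicArc x y w).continuousOn (parabolicArc_zero x y w)
    (parabolicArc_one x y w) (image_subset_iff.2 fun t ht ↦ ?_)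
  exact ⟨parabolicArc_mem_of_convex hBc hball hyB hwε ht, hw t ht⟩

theorem pathconnected_of_remove_small_set_general {U : Set E} (hUo : IsOpen U)
    (hUc : IsConnected U) (hS : μH[(finrank ℝ E : ℝ) - 1] S = 0) : IsPathConnected (U \ S) := by
  refine isPathConnected_diff_of_locally hUc
    (dense_compl_of_hausdorffMeasure_eq_zero (sub_le_self _ zero_le_one) hS) fun a ha ↦ ?_
  obtain ⟨r, hr, hball⟩ := Metric.isOpen_iff.1 hUo a ha
  exact ⟨Metric.ball a r, Metric.ball_mem_nhds a hr, hball,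
    isPathConnected_diff_of_convex Metric.isOpen_ball (convex_ball a r)
      (Metric.nonempty_ball.2 hr) hS⟩

end FiniteDimensional

/-- Lemma 3.5: removing from a path-connected open subset of `ℝ^d` a closed set of zero
`(d−1)`-dimensional Hausdorff measure preserves path-connectedness. -/
theorem pathconnected_of_remove_small_set
    {d : ℕ} (hd : 1 ≤ d) (U S : Set (EuclideanSpace ℝ (Fin d)))
    (hUo : IsOpen U) (hUc : IsPathConnected U)
    (hSc : IsClosed S) (hS : μH[(d : ℝ) - 1] S = 0) :
    IsPathConnected (U \ S) :=
  pathconnected_of_remove_small_set_general hUo hUc.isConnected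
    (by rwa [finrank_euclideanSpace_fin])
end
end
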